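/- Let n ≤ m and n_1,…,n_m ≤ n be positive integers and N = n_1 + ⋯ + n_m. For each 1 ≤ i ≤ m let C_i be an n_i × n real matrix and Q_i a symmetric n_i × n_i matrix with C_i C_iᵀ ≤ I_{n_i}, Q_i ≥ I_{n_i}, (I_{n_i} − C_i C_iᵀ)(Q_i − I_{n_i}) = 0, and let p_i > 0. Let C be the N × n matrix whose block rows are C_1,…,C_m and let P = diag(p_1 I_{n_1},…,p_m I_{n_m}) be the N × N block-diagonal matrix. If C Cᵀ ≤ P^{-1}, then for all nonnegative functions f_i on ℝ^{n_i}, integrable with respect to γ_{n_i} and more log-convex than g_{(Q_i − I_{n_i})/(2π)}, one has ∫_{ℝⁿ} ∏_{i=1}^m f_i(C_i x)^{p_i} dγ_n(x) ≤ ∏_{i=1}^m (∫_{ℝ^{n_i}} f_i dγ_{n_i})^{p_i}. -/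

import Mathlib

open MeasureTheory Matrix
open scoped ENNReal

noncomputable section

/-- The centered Gaussian function attached to a matrix `Q` : `g_Q(x) = exp(-π⟨Qx,x⟩)`. -/
def gaussFn {k : ℕ} (Q : Matrix (Fin k) (Fin k) ℝ) (x : Fin k → ℝ) : ℝ :=
  Real.exp (-Real.pi * (Q.mulVec x ⬝ᵥ x))

/-- A nonnegative log-convex function. -/
def LogConvexFun {k : ℕ} (h : (Fin k → ℝ) → ℝ) : Prop :=
  (∀ x, 0 ≤ h x) ∧
    ∀ x y : Fin k → ℝ, ∀ a b : ℝ, 0 ≤ a → 0 ≤ b → a + b = 1 →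
      h (a • x + b • y) ≤ h x ^ a * h y ^ b

/-- `f` is more log-convex than `g_Q`, i.e. `f = g_Q · h` with `h` log-convex. -/
def MoreLogConvex {k : ℕ} (f : (Fin k → ℝ) → ℝ) (Q : Matrix (Fin k) (Fin k) ℝ) : Prop :=
  ∃ h : (Fin k → ℝ) → ℝ, LogConvexFun h ∧ f = fun x => gaussFn Q x * h x

/-- The standard Gaussian probability measure on `ℝ^k`. -/
def stdGaussian (k : ℕ) : Measure (Fin k → ℝ) :=
  volume.withDensity fun x =>
    ENNReal.ofReal ((2 * Real.pi) ^ (-(k : ℝ) / 2) * Real.exp (-(∑ i, x i ^ 2) / 2))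

/-!
Suppose first that the maps `B i` are coisometries with `∑ i, c i • B i† ∘ B i ≤ 1`. In one step
of length `τ` of the heat flow, the average of `∏ i, (u i ∘ B i) ^ c i` is at most `1 + K * τ ^ 3`
times the product of the averages of the `u i` raised to the `c i`: the terms of first order have
mean zero, those of second order combine to `((∑ i, c i * φ i) ^ 2 - ∑ i, c i * φ i ^ 2) / 2` for
linear forms `φ i` (the logarithmic derivatives), whose Gaussian mean is nonpositive by the frame
condition. Hence `k` steps of length `1 / √k` cost a factor `(1 + K * k ^ (-3 / 2)) ^ k → 1`.

A contraction `C i` becomes a coisometry `(x, z) ↦ C i x + A i z` on adding noise with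
`C i * (C i)ᵀ + A i * (A i)ᵀ = 1`. With `K` independent copies of the noise for every `i`, each
paired with its own copy of `f i`, the frame condition holds for the exponents
`p i / (K + ∑ j, p j)`; the `K` copies of `f i` together carry the exponent
`K * p i / (K + ∑ j, p j)`, which tends to `p i`. The noise is removed by averaging over the
reflection `z ↦ -z`: the quadratic form of `Q i - 1` vanishes on the range of `A i`, so that
midpoint log-convexity gives `f i y ^ 2 ≤ f i (y + A i z) * f i (y - A i z)`.
-/

open Filter Topology
open ContinuousLinearMap (adjoint)
open scoped NNReal

local notation "γ" => ProbabilityTheory.stdGaussian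

section ScalarEstimates

variable {ι : Type*} [Fintype ι] {c r l : ι → ℝ}

lemma abs_exp_sub_quadratic_le (s : ℝ) :
    |Real.exp s - (1 + s + s ^ 2 / 2)| ≤ |s| ^ 3 * Real.exp |s| := by
  have h := Complex.norm_exp_sub_sum_le_norm_mul_exp (s : ℂ) 3
  have hreal : Complex.exp (s : ℂ) - ∑ m ∈ Finset.range 3, (s : ℂ) ^ m / (m.factorial : ℂ)
      = ((Real.exp s - (1 + s + s ^ 2 / 2) : ℝ) : ℂ) := by
    simp [Finset.sum_range_succ]
  simpa only [hreal, Complex.norm_real, Real.norm_eq_abs] using h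

lemma abs_pow_three_mul_exp_abs_le {s ρ R : ℝ} (hρ : |s| ≤ ρ) (hR : |s| ≤ R) :
    |s| ^ 3 * Real.exp |s| ≤ ρ ^ 3 * Real.exp R := by
  gcongr
  exact pow_nonneg ((abs_nonneg s).trans hρ) 3

lemma abs_sum_mul_le (hc : ∀ i, 0 ≤ c i) {A : ℝ} (hr : ∀ i, |r i| ≤ A) :
    |∑ i, c i * r i| ≤ (∑ i, c i) * A := by
  refine (Finset.abs_sum_le_sum_abs _ _).trans ?_
  rw [Finset.sum_mul]
  refine Finset.sum_le_sum fun i _ => ?_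
  rw [abs_mul, abs_of_nonneg (hc i)]
  exact mul_le_mul_of_nonneg_left (hr i) (hc i)

lemma exp_sum_mul_le (hc : ∀ i, 0 ≤ c i) {ρ R : ℝ} (hρ : ∀ i, |r i| ≤ ρ) (hR : ∀ i, |r i| ≤ R) :
    Real.exp (∑ i, c i * r i) ≤ 1 + ∑ i, c i * (Real.exp (r i) - 1)
      + ((∑ i, c i * r i) ^ 2 - ∑ i, c i * r i ^ 2) / 2
      + ((∑ i, c i) ^ 3 * Real.exp ((∑ i, c i) * R) + (∑ i, c i) * Real.exp R) * ρ ^ 3 := by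
  set S := ∑ i, c i
  set s := ∑ i, c i * r i
  have hexp : Real.exp s ≤ 1 + s + s ^ 2 / 2 + (S * ρ) ^ 3 * Real.exp (S * R) := by
    have h₁ := (abs_le.1 (abs_exp_sub_quadratic_le s)).2
    have h₂ := abs_pow_three_mul_exp_abs_le (abs_sum_mul_le hc hρ) (abs_sum_mul_le hc hR)
    linarith
  have hterm (i : ι) : r i ≤ Real.exp (r i) - 1 - r i ^ 2 / 2 + ρ ^ 3 * Real.exp R := by
    have h₁ := (abs_le.1 (abs_exp_sub_quadratic_le (r i))).1
    have h₂ := abs_pow_three_mul_exp_abs_le (hρ i) (hR i)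
    linarith
  have hlin : s ≤ ∑ i, c i * (Real.exp (r i) - 1) - (∑ i, c i * r i ^ 2) / 2
      + S * (ρ ^ 3 * Real.exp R) := by
    calc s ≤ ∑ i, c i * (Real.exp (r i) - 1 - r i ^ 2 / 2 + ρ ^ 3 * Real.exp R) :=
          Finset.sum_le_sum fun i _ => mul_le_mul_of_nonneg_left (hterm i) (hc i)
      _ = _ := by
          rw [Finset.sum_mul, Finset.sum_div, ← Finset.sum_sub_distrib, ← Finset.sum_add_distrib]
          exact Finset.sum_congr rfl fun i _ => by ring
  linarith [mul_pow S ρ 3]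

lemma abs_sq_sub_sq_le {x y ρ δ : ℝ} (hx : |x| ≤ ρ) (hy : |y| ≤ ρ) (hxy : |x - y| ≤ δ) :
    |x ^ 2 - y ^ 2| ≤ 2 * ρ * δ := by
  rw [sq_sub_sq, abs_mul]
  have hadd : |x + y| ≤ 2 * ρ := (abs_add_le x y).trans (by linarith)
  exact mul_le_mul hadd hxy (abs_nonneg _) ((abs_nonneg _).trans hadd)

lemma sq_sum_sub_sum_sq_le (hc : ∀ i, 0 ≤ c i) {ρ δ : ℝ} (hr : ∀ i, |r i| ≤ ρ)
    (hl : ∀ i, |l i| ≤ ρ) (hrl : ∀ i, |r i - l i| ≤ δ) :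
    (∑ i, c i * r i) ^ 2 - ∑ i, c i * r i ^ 2 ≤ (∑ i, c i * l i) ^ 2 - ∑ i, c i * l i ^ 2
      + 2 * ((∑ i, c i) ^ 2 + ∑ i, c i) * (ρ * δ) := by
  have hsum : |∑ i, c i * r i - ∑ i, c i * l i| ≤ (∑ i, c i) * δ := by
    simpa only [mul_sub, Finset.sum_sub_distrib] using abs_sum_mul_le hc hrl
  have hsq := abs_sum_mul_le hc fun i => abs_sq_sub_sq_le (hr i) (hl i) (hrl i)
  simp only [mul_sub, Finset.sum_sub_distrib] at hsq
  have h₁ := abs_sq_sub_sq_le (abs_sum_mul_le hc hr) (abs_sum_mul_le hc hl) hsum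
  linarith [(abs_le.1 h₁).2, (abs_le.1 hsq).1]

lemma prod_rpow_le {t : ι → ℝ} (hc : ∀ i, 0 ≤ c i) (ht : ∀ i, 0 < t i) {ρ δ R : ℝ}
    (hρ : ∀ i, |Real.log (t i)| ≤ ρ) (hR : ∀ i, |Real.log (t i)| ≤ R) (hl : ∀ i, |l i| ≤ ρ)
    (hδ : ∀ i, |Real.log (t i) - l i| ≤ δ) :
    ∏ i, t i ^ c i ≤ 1 + ∑ i, c i * (t i - 1) + ((∑ i, c i * l i) ^ 2 - ∑ i, c i * l i ^ 2) / 2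
      + (((∑ i, c i) ^ 3 * Real.exp ((∑ i, c i) * R) + (∑ i, c i) * Real.exp R) * ρ ^ 3
        + ((∑ i, c i) ^ 2 + ∑ i, c i) * (ρ * δ)) := by
  have hprod : ∏ i, t i ^ c i = Real.exp (∑ i, c i * Real.log (t i)) := by
    rw [Real.exp_sum]
    exact Finset.prod_congr rfl fun i _ => by rw [Real.rpow_def_of_pos (ht i), mul_comm]
  have hcubic := exp_sum_mul_le hc hρ hR
  simp only [Real.exp_log (ht _)] at hcubic
  linarith [sq_sum_sub_sum_sq_le hc hρ hl hδ]

variable {a p q : ℝ}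

lemma abs_log_div_le (ha : 0 < a) (hp : a ≤ p) (hq : a ≤ q) :
    |Real.log (p / q)| ≤ |p - q| / a := by
  wlog h : q ≤ p generalizing p q
  · simpa only [abs_sub_comm, ← abs_neg (Real.log (p / q)), ← Real.log_inv, inv_div]
      using this hq hp (le_of_not_ge h)
  have hq₀ : 0 < q := ha.trans_le hq
  rw [abs_of_nonneg (Real.log_nonneg ((one_le_div hq₀).2 h)), abs_of_nonneg (sub_nonneg.2 h)]
  calc Real.log (p / q) ≤ p / q - 1 :=
        Real.log_le_sub_one_of_pos (div_pos (ha.trans_le hp) hq₀)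
    _ = (p - q) / q := by field_simp
    _ ≤ (p - q) / a := by gcongr

lemma abs_log_div_sub_le (ha : 0 < a) (hp : a ≤ p) (hq : a ≤ q) :
    |Real.log (p / q) - (p - q) / q| ≤ (|p - q| / a) ^ 2 := by
  have hp₀ : 0 < p := ha.trans_le hp
  have hq₀ : 0 < q := ha.trans_le hq
  have hup : Real.log (p / q) ≤ (p - q) / q := by
    simpa only [sub_div, div_self hq₀.ne'] using Real.log_le_sub_one_of_pos (div_pos hp₀ hq₀)
  have hlow : (p - q) / q - (p - q) ^ 2 / (p * q) ≤ Real.log (p / q) := by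
    convert Real.one_sub_inv_le_log_of_pos (div_pos hp₀ hq₀) using 1
    field_simp
    ring
  have hsq : (p - q) ^ 2 / (p * q) ≤ (|p - q| / a) ^ 2 := by
    rw [div_pow, sq_abs, sq a]
    gcongr
  rw [abs_le]
  constructor <;> linarith [sq_nonneg (|p - q| / a)]

lemma abs_log_div_le_log_div {b : ℝ} (ha : 0 < a) (hp : p ∈ Set.Icc a b) (hq : q ∈ Set.Icc a b) :
    |Real.log (p / q)| ≤ Real.log (b / a) := by
  have hp₀ : 0 < p := ha.trans_le hp.1
  have hq₀ : 0 < q := ha.trans_le hq.1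
  rw [abs_le, ← Real.log_inv, inv_div]
  constructor
  · exact Real.log_le_log (div_pos ha (hp₀.trans_le hp.2)) (div_le_div₀ hp₀.le hp.1 hq₀ hq.2)
  · exact Real.log_le_log (div_pos hp₀ hq₀) (div_le_div₀ (hp₀.le.trans hp.2) hp.2 ha hq.1)

end ScalarEstimates

section GaussianMeasure

variable {E F : Type*} [NormedAddCommGroup E] [InnerProductSpace ℝ E] [FiniteDimensional ℝ E]
  [NormedAddCommGroup F] [InnerProductSpace ℝ F] [FiniteDimensional ℝ F]

lemma strongDual_comp_eq_toDual_adjoint (B : E →L[ℝ] F) (φ : StrongDual ℝ F) :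
    φ.comp B = InnerProductSpace.toDual ℝ E
      (adjoint B ((InnerProductSpace.toDual ℝ F).symm φ)) := by
  ext x
  simp [ContinuousLinearMap.adjoint_inner_left]

lemma norm_le_of_norm_adjoint {B : E →L[ℝ] F} (hB : ∀ w, ‖adjoint B w‖ = ‖w‖) (x : E) :
    ‖B x‖ ≤ ‖x‖ := by
  have hadj : ‖adjoint B‖ ≤ 1 := ContinuousLinearMap.opNorm_le_bound _ zero_le_one (by simp [hB])
  rw [LinearIsometryEquiv.norm_map] at hadj
  simpa using B.le_of_opNorm_le hadj x

variable [MeasurableSpace E] [BorelSpace E] [MeasurableSpace F] [BorelSpace F]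

lemma integrable_one_add_norm_pow_stdGaussian (k : ℕ) :
    Integrable (fun x : E => (1 + ‖x‖) ^ k) (γ E) := by
  have hone : MemLp (fun _ : E => (1 : ℝ)) k (γ E) := memLp_const 1
  have hnorm : MemLp (fun x : E => ‖x‖) k (γ E) :=
    (ProbabilityTheory.IsGaussian.memLp_id (γ E) k (by simp)).norm
  refine (hone.add hnorm).integrable_norm_pow'.congr (.of_forall fun x => ?_)
  simp only [Pi.add_apply, Real.norm_of_nonneg (by positivity : 0 ≤ 1 + ‖x‖)]

lemma integrable_stdGaussian_of_le {V : Type*} [NormedAddCommGroup V] {f : E → V}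
    (hf : Continuous f) {C : ℝ} (k : ℕ) (hC : ∀ x, ‖f x‖ ≤ C * (1 + ‖x‖) ^ k) :
    Integrable f (γ E) :=
  ((integrable_one_add_norm_pow_stdGaussian k).const_mul C).mono' hf.aestronglyMeasurable
    (.of_forall hC)

lemma integrable_strongDual_stdGaussian (φ : StrongDual ℝ E) : Integrable φ (γ E) :=
  φ.integrable_comp ProbabilityTheory.IsGaussian.integrable_id

lemma integrable_strongDual_sq_stdGaussian (φ : StrongDual ℝ E) :
    Integrable (fun x => φ x ^ 2) (γ E) :=
  integrable_stdGaussian_of_le (C := ‖φ‖ ^ 2) (by fun_prop) 2 fun x => by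
    rw [norm_pow, ← mul_pow]
    gcongr
    exact φ.le_opNorm_of_le (by linarith)

lemma integral_strongDual_sq_stdGaussian (φ : StrongDual ℝ E) :
    ∫ x, φ x ^ 2 ∂(γ E) = ‖φ‖ ^ 2 := by
  rw [← ProbabilityTheory.variance_dual_stdGaussian, ProbabilityTheory.variance_of_integral_eq_zero
    (by fun_prop) (ProbabilityTheory.integral_strongDual_stdGaussian φ)]

lemma integrable_sq_sum_sub_sum_sq_stdGaussian {ι : Type*} [Fintype ι] (c : ι → ℝ)
    (φ : ι → StrongDual ℝ E) :
    Integrable (fun x => (∑ i, c i * φ i x) ^ 2 - ∑ i, c i * φ i x ^ 2) (γ E) := by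
  have hsum : Integrable (fun x => (∑ i, c i * φ i x) ^ 2) (γ E) := by
    simpa using integrable_strongDual_sq_stdGaussian (∑ i, c i • φ i)
  exact hsum.sub (integrable_finsetSum _ fun i _ =>
    (integrable_strongDual_sq_stdGaussian (φ i)).const_mul (c i))

lemma integral_sq_sum_sub_sum_sq_stdGaussian {ι : Type*} [Fintype ι] (c : ι → ℝ)
    (φ : ι → StrongDual ℝ E) :
    ∫ x, ((∑ i, c i * φ i x) ^ 2 - ∑ i, c i * φ i x ^ 2) ∂(γ E)
      = ‖∑ i, c i • φ i‖ ^ 2 - ∑ i, c i * ‖φ i‖ ^ 2 := by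
  have hsq (x : E) : (∑ i, c i * φ i x) ^ 2 = (∑ i, c i • φ i : StrongDual ℝ E) x ^ 2 := by simp
  have hint (i : ι) : Integrable (fun x => c i * φ i x ^ 2) (γ E) :=
    (integrable_strongDual_sq_stdGaussian (φ i)).const_mul (c i)
  simp only [hsq]
  rw [integral_sub (integrable_strongDual_sq_stdGaussian _) (integrable_finsetSum _ fun i _ =>
    hint i), integral_strongDual_sq_stdGaussian, integral_finsetSum _ fun i _ => hint i]
  simp only [integral_const_mul, integral_strongDual_sq_stdGaussian]

lemma map_stdGaussian_of_norm_adjoint {B : E →L[ℝ] F} (hB : ∀ w, ‖adjoint B w‖ = ‖w‖) :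
    (γ E).map B = γ F := by
  have : IsProbabilityMeasure ((γ E).map B) :=
    Measure.isProbabilityMeasure_map B.continuous.aemeasurable
  refine Measure.ext_of_charFun (funext fun t => ?_)
  rw [ProbabilityTheory.charFun_stdGaussian, ← hB t, ← ProbabilityTheory.charFun_stdGaussian,
    charFun_apply, charFun_apply, integral_map B.continuous.aemeasurable
      (by fun_prop : Continuous _).aestronglyMeasurable]
  simp only [ContinuousLinearMap.adjoint_inner_right]

lemma map_add_smul_prod_stdGaussian {a b c : ℝ} (h : a ^ 2 + b ^ 2 = c ^ 2) :
    ((γ F).prod (γ F)).map (fun p => a • p.1 + b • p.2) = (γ F).map (fun x => c • x) := by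
  have hprob (r : ℝ) : IsProbabilityMeasure ((γ F).map (fun x => r • x)) :=
    Measure.isProbabilityMeasure_map (by fun_prop)
  have hsplit : ((γ F).prod (γ F)).map (fun p => a • p.1 + b • p.2)
      = (((γ F).map (fun x => a • x)).prod ((γ F).map (fun x => b • x))).map
        (fun p => p.1 + p.2) := by
    rw [Measure.map_prod_map _ _ (by fun_prop) (by fun_prop),
      Measure.map_map (by fun_prop) (by fun_prop)]
    rfl
  have : IsProbabilityMeasure ((((γ F).map (fun x => a • x)).prod ((γ F).map (fun x => b • x))).map
      (fun p => p.1 + p.2)) := Measure.isProbabilityMeasure_map (by fun_prop)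
  rw [hsplit]
  refine Measure.ext_of_charFun ?_
  rw [ProbabilityTheory.charFun_map_add_prod_eq_mul]
  ext t
  have hnorm (r : ℝ) : ((‖r‖ * ‖t‖ : ℝ) : ℂ) ^ 2 = (r : ℂ) ^ 2 * (‖t‖ : ℂ) ^ 2 := by
    rw [← Complex.ofReal_pow, mul_pow, Real.norm_eq_abs, sq_abs]
    push_cast
    ring
  have hC : (a : ℂ) ^ 2 + (b : ℂ) ^ 2 = (c : ℂ) ^ 2 := by exact_mod_cast h
  simp only [Pi.mul_apply, charFun_map_smul, ProbabilityTheory.charFun_stdGaussian, norm_smul,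
    ← Complex.exp_add, hnorm, ← hC]
  congr 1
  ring

/-- The Gaussian average of `u` at scale `τ`: the expectation of `u (x + τ • Y)` for a standard
Gaussian vector `Y`, that is, the heat flow started at `u` at time `τ ^ 2 / 2`. -/
def gaussAvg {V : Type*} [NormedAddCommGroup V] [NormedSpace ℝ V] (τ : ℝ) (u : F → V) (x : F) : V :=
  ∫ y, u (x + τ • y) ∂(γ F)

section

variable {V : Type*} [NormedAddCommGroup V] {τ M : ℝ} {u : F → V}

lemma integrable_comp_add_smul_stdGaussian (hu : Continuous u) (hM : ∀ x, ‖u x‖ ≤ M) (τ : ℝ)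
    (x : F) : Integrable (fun y => u (x + τ • y)) (γ F) :=
  integrable_stdGaussian_of_le (by fun_prop) 0 fun y => by
    simpa only [pow_zero, mul_one] using hM _

variable [NormedSpace ℝ V]

lemma gaussAvg_gaussAvg {a b c : ℝ} (h : a ^ 2 + b ^ 2 = c ^ 2) (hu : Continuous u)
    (hM : ∀ x, ‖u x‖ ≤ M) : gaussAvg a (gaussAvg b u) = gaussAvg c u := by
  ext x
  have hux : Continuous fun z => u (x + z) := by fun_prop
  have hint : Integrable (fun p : F × F => u (x + (a • p.1 + b • p.2))) ((γ F).prod (γ F)) :=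
    (integrable_const M).mono' (by fun_prop : Continuous _).aestronglyMeasurable
      (.of_forall fun p => hM _)
  calc gaussAvg a (gaussAvg b u) x
      = ∫ p, u (x + (a • p.1 + b • p.2)) ∂((γ F).prod (γ F)) := by
        rw [integral_prod _ hint]
        simp only [gaussAvg, add_assoc]
    _ = ∫ z, u (x + z) ∂((γ F).map (fun y => c • y)) := by
        rw [← map_add_smul_prod_stdGaussian h,
          integral_map (by fun_prop) hux.aestronglyMeasurable]
    _ = gaussAvg c u x := integral_map (by fun_prop) hux.aestronglyMeasurable

lemma gaussAvg_comp_of_norm_adjoint {B : E →L[ℝ] F} (hB : ∀ w, ‖adjoint B w‖ = ‖w‖)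
    (hu : Continuous u) (τ : ℝ) (x : E) :
    gaussAvg τ (fun x => u (B x)) x = gaussAvg τ u (B x) := by
  rw [gaussAvg, gaussAvg, ← map_stdGaussian_of_norm_adjoint hB,
    integral_map B.continuous.aemeasurable (by fun_prop : Continuous _).aestronglyMeasurable]
  simp only [map_add, map_smul]

lemma lipschitzWith_gaussAvg {L : ℝ≥0} (hu : LipschitzWith L u) (hM : ∀ x, ‖u x‖ ≤ M) :
    LipschitzWith L (gaussAvg τ u) := by
  refine LipschitzWith.of_dist_le_mul fun x x' => ?_
  have hint := integrable_comp_add_smul_stdGaussian hu.continuous hM τ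
  rw [dist_eq_norm, gaussAvg, gaussAvg, ← integral_sub (hint x) (hint x')]
  simpa using norm_integral_le_of_norm_le_const (μ := γ F) (.of_forall fun y =>
    by simpa [dist_eq_norm] using hu.dist_le_mul (x + τ • y) (x' + τ • y))

lemma hasFDerivAt_gaussAvg {u : F → ℝ} {L : ℝ≥0} (hu : Differentiable ℝ u) (hM : ∀ x, ‖u x‖ ≤ M)
    (hL : LipschitzWith L u) (hu' : Continuous (fderiv ℝ u)) (x : F) :
    HasFDerivAt (gaussAvg τ u) (gaussAvg τ (fderiv ℝ u) x) x := by
  have hint := integrable_comp_add_smul_stdGaussian hu.continuous hM τ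
  refine hasFDerivAt_integral_of_dominated_of_fderiv_le
    (F' := fun x y => fderiv ℝ u (x + τ • y)) (bound := fun _ => (L : ℝ)) univ_mem
    (.of_forall fun x => (hint x).aestronglyMeasurable) (hint x)
    (by fun_prop : Continuous _).aestronglyMeasurable
    (.of_forall fun y x _ => norm_fderiv_le_of_lipschitz ℝ hL) (integrable_const _)
    (.of_forall fun y x _ => ?_)
  exact (hasFDerivAt_comp_add_right (τ • y)).2 (hu (x + τ • y)).hasFDerivAt

end

end GaussianMeasure

section RegularFunctions

variable {F : Type*} [NormedAddCommGroup F] [InnerProductSpace ℝ F]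

/-- Functions of class `C^{1,1}` with values in `[a, b]`, where `L` is a common Lipschitz constant
of the function and of its derivative. The heat flow preserves this class, which makes the error
terms of the short-time expansion uniform. -/
structure IsC11Between (a b : ℝ) (L : ℝ≥0) (u : F → ℝ) : Prop where
  mem_Icc : ∀ x, u x ∈ Set.Icc a b
  differentiable : Differentiable ℝ u
  lipschitzWith : LipschitzWith L u
  lipschitzWith_fderiv : LipschitzWith L (fderiv ℝ u)

namespace IsC11Between

variable {a b τ : ℝ} {L : ℝ≥0} {u : F → ℝ}

lemma nonneg (ha : 0 < a) (hu : IsC11Between a b L u) (x : F) : 0 ≤ u x :=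
  ha.le.trans (hu.mem_Icc x).1

lemma norm_le (ha : 0 < a) (hu : IsC11Between a b L u) (x : F) : ‖u x‖ ≤ b := by
  rw [Real.norm_of_nonneg (hu.nonneg ha x)]
  exact (hu.mem_Icc x).2

lemma norm_fderiv_le (hu : IsC11Between a b L u) (x : F) : ‖fderiv ℝ u x‖ ≤ L :=
  norm_fderiv_le_of_lipschitz ℝ hu.lipschitzWith

lemma abs_fderiv_apply_le (hu : IsC11Between a b L u) (x v : F) :
    |fderiv ℝ u x v| ≤ L * ‖v‖ :=
  (fderiv ℝ u x).le_of_opNorm_le (hu.norm_fderiv_le x) v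

lemma abs_sub_fderiv_le (hu : IsC11Between a b L u) (x v : F) :
    |u (x + v) - u x - fderiv ℝ u x v| ≤ L * ‖v‖ ^ 2 := by
  have hbound (y : F) (hy : y ∈ Metric.closedBall x ‖v‖) :
      ‖fderiv ℝ u y - fderiv ℝ u x‖ ≤ L * ‖v‖ :=
    (hu.lipschitzWith_fderiv.norm_sub_le y x).trans
      (mul_le_mul_of_nonneg_left (mem_closedBall_iff_norm.1 hy) L.2)
  have h := (convex_closedBall x ‖v‖).norm_image_sub_le_of_norm_fderiv_le'
    (fun y _ => hu.differentiable y) hbound (Metric.mem_closedBall_self (norm_nonneg v))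
    (y := x + v) (by simp)
  rw [add_sub_cancel_left] at h
  rw [pow_two, ← mul_assoc]
  exact h

variable {E : Type*} [NormedAddCommGroup E] [InnerProductSpace ℝ E] [FiniteDimensional ℝ E]
  [MeasurableSpace E] [BorelSpace E]

lemma integrable_comp_add_smul_comp (ha : 0 < a) (hu : IsC11Between a b L u) (B : E →L[ℝ] F)
    (τ : ℝ) (x : E) : Integrable (fun y => u (B x + τ • B y)) (γ E) := by
  simpa only [Function.comp_apply, map_add, map_smul] using integrable_comp_add_smul_stdGaussian
    (hu.lipschitzWith.continuous.comp B.continuous) (fun _ => hu.norm_le ha _) τ x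

variable [FiniteDimensional ℝ F] [MeasurableSpace F] [BorelSpace F]

lemma integrable_comp_add_smul (ha : 0 < a) (hu : IsC11Between a b L u) (τ : ℝ) (x : F) :
    Integrable (fun y => u (x + τ • y)) (γ F) :=
  integrable_comp_add_smul_stdGaussian hu.lipschitzWith.continuous (hu.norm_le ha) τ x

lemma fderiv_gaussAvg (ha : 0 < a) (hu : IsC11Between a b L u) :
    fderiv ℝ (gaussAvg τ u) = gaussAvg τ (fderiv ℝ u) :=
  funext fun x => (hasFDerivAt_gaussAvg hu.differentiable (hu.norm_le ha) hu.lipschitzWith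
    hu.lipschitzWith_fderiv.continuous x).fderiv

protected lemma gaussAvg (ha : 0 < a) (hu : IsC11Between a b L u) (τ : ℝ) :
    IsC11Between a b L (gaussAvg τ u) where
  mem_Icc x := (convex_Icc a b).integral_mem isClosed_Icc (.of_forall fun y => hu.mem_Icc _)
    (hu.integrable_comp_add_smul ha τ x)
  differentiable x := (hasFDerivAt_gaussAvg hu.differentiable (hu.norm_le ha) hu.lipschitzWith
    hu.lipschitzWith_fderiv.continuous x).differentiableAt
  lipschitzWith := lipschitzWith_gaussAvg hu.lipschitzWith (hu.norm_le ha)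
  lipschitzWith_fderiv := by
    rw [hu.fderiv_gaussAvg ha]
    exact lipschitzWith_gaussAvg hu.lipschitzWith_fderiv hu.norm_fderiv_le

lemma abs_gaussAvg_sub_le (ha : 0 < a) (hu : IsC11Between a b L u) (τ : ℝ) (x : F) :
    |gaussAvg τ u x - u x| ≤ L * τ ^ 2 * ∫ y, ‖y‖ ^ 2 ∂(γ F) := by
  have hint : Integrable (fun y => u (x + τ • y) - u x) (γ F) :=
    (hu.integrable_comp_add_smul ha τ x).sub (integrable_const _)
  have hlin := (integrable_strongDual_stdGaussian (fderiv ℝ u x)).const_mul τ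
  have hexpand : gaussAvg τ u x - u x
      = ∫ y, (u (x + τ • y) - u x - fderiv ℝ u x (τ • y)) ∂(γ F) := by
    simp only [map_smul, smul_eq_mul]
    rw [integral_sub hint hlin, integral_const_mul,
      ProbabilityTheory.integral_strongDual_stdGaussian, mul_zero, sub_zero,
      integral_sub (hu.integrable_comp_add_smul ha τ x) (integrable_const _), integral_const,
      probReal_univ, one_smul, gaussAvg]
  have hnorm : Integrable (fun y : F => L * τ ^ 2 * ‖y‖ ^ 2) (γ F) :=
    integrable_stdGaussian_of_le (C := L * τ ^ 2) (by fun_prop) 2 fun y => by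
      rw [Real.norm_of_nonneg (by positivity)]
      gcongr
      linarith
  rw [hexpand, ← integral_const_mul, ← Real.norm_eq_abs]
  refine norm_integral_le_of_norm_le hnorm (.of_forall fun y => ?_)
  simpa only [norm_smul, mul_pow, Real.norm_eq_abs, sq_abs, ← mul_assoc]
    using hu.abs_sub_fderiv_le x (τ • y)

lemma abs_sub_gaussAvg_le (ha : 0 < a) (hu : IsC11Between a b L u) (hτ : 0 ≤ τ) (hτ₁ : τ ≤ 1)
    (x v : F) :
    |u (x + τ • v) - gaussAvg τ u x|
      ≤ L * (1 + ∫ y, ‖y‖ ^ 2 ∂(γ F)) * (τ * (1 + ‖v‖)) := by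
  have : 0 ≤ ∫ y, ‖y‖ ^ 2 ∂(γ F) := integral_nonneg fun y => by positivity
  have hlip : |u (x + τ • v) - u x| ≤ L * (τ * ‖v‖) := by
    simpa [norm_smul, abs_of_nonneg hτ] using hu.lipschitzWith.norm_sub_le (x + τ • v) x
  have havg := hu.abs_gaussAvg_sub_le ha τ x
  rw [abs_sub_comm] at havg
  calc |u (x + τ • v) - gaussAvg τ u x|
      ≤ L * (τ * ‖v‖) + L * τ ^ 2 * ∫ y, ‖y‖ ^ 2 ∂(γ F) :=
        (abs_sub_le _ (u x) _).trans (add_le_add hlip havg)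
    _ ≤ L * (τ * (1 + ‖v‖)) + L * (τ * (1 + ‖v‖)) * ∫ y, ‖y‖ ^ 2 ∂(γ F) := by
        gcongr
        · linarith
        · nlinarith [norm_nonneg v]
    _ = _ := by ring

lemma abs_sub_gaussAvg_sub_fderiv_le (ha : 0 < a) (hu : IsC11Between a b L u) (τ : ℝ) (x v : F) :
    |u (x + τ • v) - gaussAvg τ u x - τ * fderiv ℝ u x v|
      ≤ L * (1 + ∫ y, ‖y‖ ^ 2 ∂(γ F)) * (τ ^ 2 * (1 + ‖v‖) ^ 2) := by
  have : 0 ≤ ∫ y, ‖y‖ ^ 2 ∂(γ F) := integral_nonneg fun y => by positivity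
  have htaylor : |u (x + τ • v) - u x - τ * fderiv ℝ u x v| ≤ L * (τ ^ 2 * ‖v‖ ^ 2) := by
    simpa [norm_smul, mul_pow] using hu.abs_sub_fderiv_le x (τ • v)
  have havg := hu.abs_gaussAvg_sub_le ha τ x
  calc |u (x + τ • v) - gaussAvg τ u x - τ * fderiv ℝ u x v|
      = |(u (x + τ • v) - u x - τ * fderiv ℝ u x v) - (gaussAvg τ u x - u x)| := by ring_nf
    _ ≤ L * (τ ^ 2 * ‖v‖ ^ 2) + L * τ ^ 2 * ∫ y, ‖y‖ ^ 2 ∂(γ F) :=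
        (abs_sub _ _).trans (add_le_add htaylor havg)
    _ ≤ L * (τ ^ 2 * (1 + ‖v‖) ^ 2)
        + L * (τ ^ 2 * (1 + ‖v‖) ^ 2) * ∫ y, ‖y‖ ^ 2 ∂(γ F) := by
        gcongr
        · linarith
        · exact le_mul_of_one_le_right (sq_nonneg τ) (one_le_pow₀ (by linarith [norm_nonneg v]))
    _ = _ := by ring

lemma abs_log_div_gaussAvg_le (ha : 0 < a) (hu : IsC11Between a b L u) (hτ : 0 ≤ τ) (hτ₁ : τ ≤ 1)
    (x v : F) :
    |Real.log (u (x + τ • v) / gaussAvg τ u x)|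
      ≤ L * (1 + ∫ y, ‖y‖ ^ 2 ∂(γ F)) / a * (τ * (1 + ‖v‖)) := by
  refine (abs_log_div_le ha (hu.mem_Icc _).1 ((hu.gaussAvg ha τ).mem_Icc x).1).trans ?_
  rw [div_mul_eq_mul_div]
  exact div_le_div_of_nonneg_right (hu.abs_sub_gaussAvg_le ha hτ hτ₁ x v) ha.le

lemma abs_log_div_gaussAvg_sub_fderiv_le (ha : 0 < a) (hu : IsC11Between a b L u) (hτ : 0 ≤ τ)
    (hτ₁ : τ ≤ 1) (x v : F) :
    |Real.log (u (x + τ • v) / gaussAvg τ u x) - τ * fderiv ℝ u x v / gaussAvg τ u x|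
      ≤ (L * (1 + ∫ y, ‖y‖ ^ 2 ∂(γ F)) / a + (L * (1 + ∫ y, ‖y‖ ^ 2 ∂(γ F)) / a) ^ 2)
        * (τ ^ 2 * (1 + ‖v‖) ^ 2) := by
  set A := L * (1 + ∫ y, ‖y‖ ^ 2 ∂(γ F)) / a with hA
  have hp : a ≤ u (x + τ • v) := (hu.mem_Icc _).1
  have hU : a ≤ gaussAvg τ u x := ((hu.gaussAvg ha τ).mem_Icc x).1
  set U := gaussAvg τ u x
  have hU₀ : 0 < U := ha.trans_le hU
  have hsq : (|u (x + τ • v) - U| / a) ^ 2 ≤ A ^ 2 * (τ ^ 2 * (1 + ‖v‖) ^ 2) := by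
    rw [← mul_pow, ← mul_pow, hA, div_mul_eq_mul_div]
    gcongr
    exact hu.abs_sub_gaussAvg_le ha hτ hτ₁ x v
  have htaylor : |(u (x + τ • v) - U) / U - τ * fderiv ℝ u x v / U|
      ≤ A * (τ ^ 2 * (1 + ‖v‖) ^ 2) := by
    have : 0 ≤ ∫ y, ‖y‖ ^ 2 ∂(γ F) := integral_nonneg fun y => by positivity
    rw [← sub_div, abs_div, abs_of_pos hU₀, hA, div_mul_eq_mul_div]
    exact div_le_div₀ (by positivity) (hu.abs_sub_gaussAvg_sub_fderiv_le ha τ x v) ha hU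
  linarith [abs_sub_le (Real.log (u (x + τ • v) / U)) ((u (x + τ • v) - U) / U)
    (τ * fderiv ℝ u x v / U), abs_log_div_sub_le ha hp hU]

lemma exists_strongDual_abs_log_div_gaussAvg_le (ha : 0 < a) (b : ℝ) (L : ℝ≥0) (F : Type*)
    [NormedAddCommGroup F] [InnerProductSpace ℝ F] [FiniteDimensional ℝ F] [MeasurableSpace F]
    [BorelSpace F] :
    ∃ M : ℝ, 0 ≤ M ∧ ∀ u : F → ℝ, IsC11Between a b L u → ∀ τ : ℝ, 0 ≤ τ → τ ≤ 1 → ∀ x : F,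
      ∃ φ : StrongDual ℝ F, ∀ v : F,
        |φ v| ≤ M * (τ * (1 + ‖v‖)) ∧
        |Real.log (u (x + τ • v) / gaussAvg τ u x)| ≤ M * (τ * (1 + ‖v‖)) ∧
        |Real.log (u (x + τ • v) / gaussAvg τ u x) - φ v| ≤ M * (τ ^ 2 * (1 + ‖v‖) ^ 2) := by
  set m := ∫ y : F, ‖y‖ ^ 2 ∂(γ F)
  have hm : 0 ≤ m := integral_nonneg fun y => by positivity
  set A := L * (1 + m) / a
  have : 0 ≤ A := by positivity
  have hLA : L / a ≤ A :=
    div_le_div_of_nonneg_right (le_mul_of_one_le_right L.2 (by linarith)) ha.le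
  have hA' : A ≤ A + A ^ 2 := by linarith [sq_nonneg A]
  refine ⟨A + A ^ 2, by positivity, fun u hu τ hτ hτ₁ x => ?_⟩
  have hU : a ≤ gaussAvg τ u x := ((hu.gaussAvg ha τ).mem_Icc x).1
  refine ⟨(τ / gaussAvg τ u x) • fderiv ℝ u x, fun v => ?_⟩
  have hφ : ((τ / gaussAvg τ u x) • fderiv ℝ u x) v = τ * fderiv ℝ u x v / gaussAvg τ u x :=
    div_mul_eq_mul_div _ _ _
  rw [hφ]
  refine ⟨?_, (hu.abs_log_div_gaussAvg_le ha hτ hτ₁ x v).trans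
    (mul_le_mul_of_nonneg_right hA' (by positivity)),
    hu.abs_log_div_gaussAvg_sub_fderiv_le ha hτ hτ₁ x v⟩
  rw [abs_div, abs_mul, abs_of_nonneg hτ, abs_of_pos (ha.trans_le hU)]
  calc τ * |fderiv ℝ u x v| / gaussAvg τ u x ≤ τ * (L * ‖v‖) / a := by
        gcongr
        exact hu.abs_fderiv_apply_le x v
    _ = L / a * (τ * ‖v‖) := by ring
    _ ≤ (A + A ^ 2) * (τ * (1 + ‖v‖)) :=
        mul_le_mul (hLA.trans hA') (by gcongr; linarith) (by positivity) (by positivity)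

lemma integral_div_gaussAvg_sub_one (ha : 0 < a) (hu : IsC11Between a b L u)
    {B : E →L[ℝ] F} (hB : ∀ w, ‖adjoint B w‖ = ‖w‖) (τ : ℝ) (x : E) :
    ∫ y, (u (B x + τ • B y) / gaussAvg τ u (B x) - 1) ∂(γ E) = 0 := by
  have havg : ∫ y, u (B x + τ • B y) ∂(γ E) = gaussAvg τ u (B x) := by
    rw [← gaussAvg_comp_of_norm_adjoint hB hu.lipschitzWith.continuous]
    simp only [gaussAvg, map_add, map_smul]
  have hpos : 0 < gaussAvg τ u (B x) := ha.trans_le ((hu.gaussAvg ha τ).mem_Icc _).1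
  rw [integral_sub ((hu.integrable_comp_add_smul_comp ha B τ x).div_const _) (integrable_const 1),
    integral_div, havg, div_self hpos.ne', integral_const, probReal_univ, one_smul, sub_self]

end IsC11Between

end RegularFunctions

section GeometricInequality

variable {ι : Type*} [Fintype ι] {E : Type*} [NormedAddCommGroup E] [InnerProductSpace ℝ E]
  [FiniteDimensional ℝ E] {F : ι → Type*} [∀ i, NormedAddCommGroup (F i)]
  [∀ i, InnerProductSpace ℝ (F i)] [∀ i, FiniteDimensional ℝ (F i)]

/-- A geometric Brascamp–Lieb datum, with the usual frame identity `∑ i, c i • B i† ∘ B i = 1`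
relaxed to `≤ 1`. The relaxed frame condition is stated for the adjoint of
`x ↦ (√(c i) • B i x)ᵢ`, which has the same norm. -/
structure IsSubgeometric (B : ∀ i, E →L[ℝ] F i) (c : ι → ℝ) : Prop where
  nonneg : ∀ i, 0 ≤ c i
  norm_adjoint : ∀ i w, ‖adjoint (B i) w‖ = ‖w‖
  norm_sq_sum_le : ∀ w : ∀ i, F i,
    ‖∑ i, c i • adjoint (B i) (w i)‖ ^ 2 ≤ ∑ i, c i * ‖w i‖ ^ 2

variable {B : ∀ i, E →L[ℝ] F i} {c : ι → ℝ} {a b τ : ℝ} {L : ℝ≥0}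

namespace IsSubgeometric

lemma norm_sq_sum_comp_le (h : IsSubgeometric B c) (φ : ∀ i, StrongDual ℝ (F i)) :
    ‖∑ i, c i • (φ i).comp (B i)‖ ^ 2 ≤ ∑ i, c i * ‖(φ i).comp (B i)‖ ^ 2 := by
  simp only [strongDual_comp_eq_toDual_adjoint, LinearIsometryEquiv.norm_map, h.norm_adjoint]
  simpa only [← LinearIsometryEquiv.norm_map (InnerProductSpace.toDual ℝ E), map_sum, map_smulₛₗ,
    conj_trivial, LinearIsometryEquiv.norm_map] using
    h.norm_sq_sum_le fun i => (InnerProductSpace.toDual ℝ (F i)).symm (φ i)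

variable {u : ∀ i, F i → ℝ}

lemma continuous_prod_rpow (h : IsSubgeometric B c) (hu : ∀ i, Continuous (u i)) :
    Continuous fun x => ∏ i, u i (B i x) ^ c i :=
  continuous_finsetProd _ fun i _ =>
    ((hu i).comp (B i).continuous).rpow_const fun _ => Or.inr (h.nonneg i)

lemma norm_prod_rpow_le (h : IsSubgeometric B c) (ha : 0 < a) (hu : ∀ i, IsC11Between a b L (u i))
    (x : E) : ‖∏ i, u i (B i x) ^ c i‖ ≤ ∏ i, b ^ c i := by
  have hu₀ (i : ι) : 0 ≤ u i (B i x) := (hu i).nonneg ha _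
  rw [Real.norm_of_nonneg (Finset.prod_nonneg fun i _ => Real.rpow_nonneg (hu₀ i) _)]
  exact Finset.prod_le_prod (fun i _ => Real.rpow_nonneg (hu₀ i) _) fun i _ =>
    Real.rpow_le_rpow (hu₀ i) ((hu i).mem_Icc _).2 (h.nonneg i)

variable [∀ i, MeasurableSpace (F i)] [∀ i, BorelSpace (F i)]

lemma exists_prod_rpow_div_gaussAvg_le (h : IsSubgeometric B c) (ha : 0 < a) (b : ℝ) (L : ℝ≥0) :
    ∃ K : ℝ, 0 ≤ K ∧ ∀ u : ∀ i, F i → ℝ, (∀ i, IsC11Between a b L (u i)) →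
      ∀ τ : ℝ, 0 ≤ τ → τ ≤ 1 → ∀ x : E, ∃ φ : ∀ i, StrongDual ℝ (F i), ∀ y : E,
        ∏ i, (u i (B i x + τ • B i y) / gaussAvg τ (u i) (B i x)) ^ c i
          ≤ 1 + ∑ i, c i * (u i (B i x + τ • B i y) / gaussAvg τ (u i) (B i x) - 1)
            + ((∑ i, c i * φ i (B i y)) ^ 2 - ∑ i, c i * φ i (B i y) ^ 2) / 2
            + K * (τ ^ 3 * (1 + ‖y‖) ^ 3) := by
  choose M hM hlog using fun i =>
    IsC11Between.exists_strongDual_abs_log_div_gaussAvg_le ha b L (F i)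
  have hMsum (i : ι) : M i ≤ ∑ j, M j := Finset.single_le_sum (fun j _ => hM j) (Finset.mem_univ i)
  have hM₀ : 0 ≤ ∑ j, M j := Finset.sum_nonneg fun j _ => hM j
  have hc₀ : 0 ≤ ∑ i, c i := Finset.sum_nonneg fun i _ => h.nonneg i
  refine ⟨((∑ i, c i) ^ 3 * Real.exp ((∑ i, c i) * Real.log (b / a))
    + (∑ i, c i) * Real.exp (Real.log (b / a))) * (∑ j, M j) ^ 3
    + ((∑ i, c i) ^ 2 + ∑ i, c i) * (∑ j, M j) ^ 2, by positivity, fun u hu τ hτ hτ₁ x => ?_⟩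
  choose φ hφ using fun i => hlog i (u i) (hu i) τ hτ hτ₁ (B i x)
  refine ⟨φ, fun y => ?_⟩
  have hU (i : ι) := ((hu i).gaussAvg ha τ).mem_Icc (B i x)
  have hu' (i : ι) := (hu i).mem_Icc (B i x + τ • B i y)
  have hB (i : ι) : ‖B i y‖ ≤ ‖y‖ := norm_le_of_norm_adjoint (h.norm_adjoint i) y
  have hρ (i : ι) : M i * (τ * (1 + ‖B i y‖)) ≤ (∑ j, M j) * (τ * (1 + ‖y‖)) :=
    mul_le_mul (hMsum i) (by gcongr; exact hB i) (by positivity) hM₀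
  have hδ (i : ι) : M i * (τ ^ 2 * (1 + ‖B i y‖) ^ 2) ≤ (∑ j, M j) * (τ ^ 2 * (1 + ‖y‖) ^ 2) :=
    mul_le_mul (hMsum i) (by gcongr; exact hB i) (by positivity) hM₀
  have hprod := prod_rpow_le h.nonneg
    (fun i => div_pos (ha.trans_le (hu' i).1) (ha.trans_le (hU i).1))
    (fun i => (hφ i (B i y)).2.1.trans (hρ i))
    (fun i => abs_log_div_le_log_div ha (hu' i) (hU i))
    (fun i => (hφ i (B i y)).1.trans (hρ i)) (fun i => (hφ i (B i y)).2.2.trans (hδ i))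
  linarith

variable [MeasurableSpace E] [BorelSpace E]

lemma integral_prod_rpow_div_gaussAvg_le (h : IsSubgeometric B c) (ha : 0 < a)
    (hu : ∀ i, IsC11Between a b L (u i)) {K : ℝ} {x : E} (φ : ∀ i, StrongDual ℝ (F i))
    (hφ : ∀ y : E, ∏ i, (u i (B i x + τ • B i y) / gaussAvg τ (u i) (B i x)) ^ c i
      ≤ 1 + ∑ i, c i * (u i (B i x + τ • B i y) / gaussAvg τ (u i) (B i x) - 1)
        + ((∑ i, c i * φ i (B i y)) ^ 2 - ∑ i, c i * φ i (B i y) ^ 2) / 2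
        + K * (τ ^ 3 * (1 + ‖y‖) ^ 3)) :
    ∫ y, ∏ i, (u i (B i x + τ • B i y) / gaussAvg τ (u i) (B i x)) ^ c i ∂(γ E)
      ≤ 1 + K * (∫ y : E, (1 + ‖y‖) ^ 3 ∂(γ E)) * τ ^ 3 := by
  have hlin (i : ι) : Integrable (fun y =>
      c i * (u i (B i x + τ • B i y) / gaussAvg τ (u i) (B i x) - 1)) (γ E) :=
    ((((hu i).integrable_comp_add_smul_comp ha (B i) τ x).div_const _).sub
      (integrable_const 1)).const_mul _
  have hlin_sum := integrable_finsetSum Finset.univ fun i _ => hlin i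
  have hlin_mean (i : ι) :
      ∫ y, c i * (u i (B i x + τ • B i y) / gaussAvg τ (u i) (B i x) - 1) ∂(γ E) = 0 := by
    rw [integral_const_mul, (hu i).integral_div_gaussAvg_sub_one ha (h.norm_adjoint i), mul_zero]
  have hquad : Integrable (fun y =>
      ((∑ i, c i * φ i (B i y)) ^ 2 - ∑ i, c i * φ i (B i y) ^ 2) / 2) (γ E) :=
    (integrable_sq_sum_sub_sum_sq_stdGaussian c fun i => (φ i).comp (B i)).div_const 2
  have hquad_mean : ∫ y, ((∑ i, c i * φ i (B i y)) ^ 2 - ∑ i, c i * φ i (B i y) ^ 2) ∂(γ E) ≤ 0 :=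
    (integral_sq_sum_sub_sum_sq_stdGaussian c fun i => (φ i).comp (B i)).trans_le
      (sub_nonpos.2 (h.norm_sq_sum_comp_le φ))
  have hcub := ((integrable_one_add_norm_pow_stdGaussian (E := E) 3).const_mul (τ ^ 3)).const_mul K
  have hone := integrable_const (μ := γ E) (1 : ℝ)
  refine (integral_mono_of_nonneg (.of_forall fun y => Finset.prod_nonneg fun i _ =>
    Real.rpow_nonneg (div_nonneg ((hu i).nonneg ha _) (((hu i).gaussAvg ha τ).nonneg ha _)) _)
    (((hone.add hlin_sum).add hquad).add hcub) (.of_forall hφ)).trans ?_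
  rw [integral_add' ((hone.add hlin_sum).add hquad) hcub, integral_add' (hone.add hlin_sum) hquad,
    integral_add' hone hlin_sum, integral_finsetSum _ fun i _ => hlin i,
    Finset.sum_eq_zero fun i _ => hlin_mean i, integral_const_mul, integral_const_mul, integral_div]
  simp only [integral_const, probReal_univ, smul_eq_mul]
  linarith

lemma exists_gaussAvg_prod_rpow_le (h : IsSubgeometric B c) (ha : 0 < a) (b : ℝ) (L : ℝ≥0) :
    ∃ K : ℝ, 0 ≤ K ∧ ∀ u : ∀ i, F i → ℝ, (∀ i, IsC11Between a b L (u i)) →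
      ∀ τ : ℝ, 0 ≤ τ → τ ≤ 1 → ∀ x : E,
        gaussAvg τ (fun x => ∏ i, u i (B i x) ^ c i) x
          ≤ (1 + K * τ ^ 3) * ∏ i, gaussAvg τ (u i) (B i x) ^ c i := by
  obtain ⟨K, hK, hpointwise⟩ := h.exists_prod_rpow_div_gaussAvg_le ha b L
  refine ⟨K * ∫ y : E, (1 + ‖y‖) ^ 3 ∂(γ E), mul_nonneg hK (integral_nonneg fun y => by positivity),
    fun u hu τ hτ hτ₁ x => ?_⟩
  obtain ⟨φ, hφ⟩ := hpointwise u hu τ hτ hτ₁ x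
  have hu₀ (i : ι) (y : F i) : 0 ≤ u i y := (hu i).nonneg ha y
  have hU (i : ι) : 0 < gaussAvg τ (u i) (B i x) :=
    ha.trans_le (((hu i).gaussAvg ha τ).mem_Icc _).1
  have hprod : 0 < ∏ i, gaussAvg τ (u i) (B i x) ^ c i :=
    Finset.prod_pos fun i _ => Real.rpow_pos_of_pos (hU i) _
  have hratio := h.integral_prod_rpow_div_gaussAvg_le ha hu φ hφ
  simp only [Real.div_rpow (hu₀ _ _) (hU _).le, Finset.prod_div_distrib] at hratio
  rw [integral_div, div_le_iff₀ hprod] at hratio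
  simpa only [gaussAvg, map_add, map_smul] using hratio

lemma gaussAvg_sqrt_prod_rpow_le (h : IsSubgeometric B c) (ha : 0 < a) {K : ℝ} (hK : 0 ≤ K)
    (hstep : ∀ u : ∀ i, F i → ℝ, (∀ i, IsC11Between a b L (u i)) → ∀ x : E,
      gaussAvg τ (fun x => ∏ i, u i (B i x) ^ c i) x ≤ K * ∏ i, gaussAvg τ (u i) (B i x) ^ c i)
    (k : ℕ) (hu : ∀ i, IsC11Between a b L (u i)) (x : E) :
    gaussAvg (√k * τ) (fun x => ∏ i, u i (B i x) ^ c i) x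
      ≤ K ^ k * ∏ i, gaussAvg (√k * τ) (u i) (B i x) ^ c i := by
  induction k generalizing u with
  | zero => simp [gaussAvg]
  | succ k ih =>
    have hscale : (√k * τ) ^ 2 + τ ^ 2 = (√(k + 1 : ℕ) * τ) ^ 2 := by
      rw [mul_pow, mul_pow, Real.sq_sqrt (by positivity), Real.sq_sqrt (by positivity)]
      push_cast
      ring
    have hcont (i : ι) := (hu i).lipschitzWith.continuous
    have hu' (i : ι) := (hu i).gaussAvg ha τ
    have hcont' := h.continuous_prod_rpow fun i => (hu' i).lipschitzWith.continuous
    rw [← gaussAvg_gaussAvg hscale (h.continuous_prod_rpow hcont) (h.norm_prod_rpow_le ha hu)]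
    simp only [← gaussAvg_gaussAvg hscale (hcont _) ((hu _).norm_le ha)]
    calc gaussAvg (√k * τ) (gaussAvg τ fun x => ∏ i, u i (B i x) ^ c i) x
        ≤ ∫ y, K * ∏ i, gaussAvg τ (u i) (B i (x + (√k * τ) • y)) ^ c i ∂(γ E) :=
          integral_mono_of_nonneg (.of_forall fun y => integral_nonneg fun z =>
            Finset.prod_nonneg fun i _ => Real.rpow_nonneg ((hu i).nonneg ha _) _)
            ((integrable_comp_add_smul_stdGaussian hcont' (h.norm_prod_rpow_le ha hu')
              _ x).const_mul K) (.of_forall fun y => hstep u hu _)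
      _ = K * gaussAvg (√k * τ) (fun x => ∏ i, gaussAvg τ (u i) (B i x) ^ c i) x :=
          integral_const_mul _ _
      _ ≤ K * (K ^ k * ∏ i, gaussAvg (√k * τ) (gaussAvg τ (u i)) (B i x) ^ c i) :=
          mul_le_mul_of_nonneg_left (ih hu') hK
      _ = _ := by ring

lemma integral_prod_rpow_le_of_isC11Between (h : IsSubgeometric B c) (ha : 0 < a)
    (hu : ∀ i, IsC11Between a b L (u i)) :
    ∫ x, ∏ i, u i (B i x) ^ c i ∂(γ E) ≤ ∏ i, (∫ y, u i y ∂(γ (F i))) ^ c i := by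
  obtain ⟨K, hK, hstep⟩ := h.exists_gaussAvg_prod_rpow_le ha b L
  have hu₀ (i : ι) : 0 ≤ ∫ y, u i y ∂(γ (F i)) := integral_nonneg ((hu i).nonneg ha)
  have hflow (k : ℕ) : ∫ x, ∏ i, u i (B i x) ^ c i ∂(γ E)
      ≤ Real.exp (K / √(k + 1 : ℕ)) * ∏ i, (∫ y, u i y ∂(γ (F i))) ^ c i := by
    have hsqrt : 1 ≤ √(k + 1 : ℕ) := Real.one_le_sqrt.2 (by simp)
    have hsq : √(k + 1 : ℕ) ^ 2 = (k + 1 : ℕ) := Real.sq_sqrt (by positivity)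
    set s := √(k + 1 : ℕ)
    have hcoeff : (1 + K * s⁻¹ ^ 3) ^ (k + 1) ≤ Real.exp (K / s) := by
      have hexponent : (k + 1 : ℕ) * (K * s⁻¹ ^ 3) = K / s := by
        rw [← hsq]
        field_simp
      rw [← hexponent, Real.exp_nat_mul]
      gcongr
      linarith [Real.add_one_le_exp (K * s⁻¹ ^ 3)]
    have hiter := h.gaussAvg_sqrt_prod_rpow_le ha (by positivity)
      (fun u hu => hstep u hu s⁻¹ (by positivity) (inv_le_one_of_one_le₀ hsqrt)) (k + 1) hu 0
    rw [mul_inv_cancel₀ (by positivity)] at hiter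
    simp only [gaussAvg, one_smul, zero_add, map_zero] at hiter
    exact hiter.trans (mul_le_mul_of_nonneg_right hcoeff
      (Finset.prod_nonneg fun i _ => Real.rpow_nonneg (hu₀ i) _))
  have hsqrt : Tendsto (fun k : ℕ => √(k + 1 : ℕ)) atTop atTop :=
    Real.tendsto_sqrt_atTop.comp (tendsto_natCast_atTop_atTop.comp (tendsto_add_atTop_nat 1))
  have hlim := ((Real.continuous_exp.tendsto 0).comp (hsqrt.const_div_atTop K)).mul_const
    (∏ i, (∫ y, u i y ∂(γ (F i))) ^ c i)
  rw [Real.exp_zero, one_mul] at hlim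
  exact ge_of_tendsto' hlim hflow

end IsSubgeometric

end GeometricInequality

section Approximation

variable {F : Type*} [NormedAddCommGroup F] [InnerProductSpace ℝ F]

lemma IsC11Between.mono {a b b' : ℝ} {L L' : ℝ≥0} {u : F → ℝ} (hu : IsC11Between a b L u)
    (hb : b ≤ b') (hL : L ≤ L') : IsC11Between a b' L' u where
  mem_Icc x := Set.Icc_subset_Icc_right hb (hu.mem_Icc x)
  differentiable := hu.differentiable
  lipschitzWith := hu.lipschitzWith.weaken hL
  lipschitzWith_fderiv := hu.lipschitzWith_fderiv.weaken hL

lemma exists_isC11Between_add_const {g : F → ℝ} (hg : ContDiff ℝ 2 g) (hsupp : HasCompactSupport g)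
    {a t : ℝ} (ha : ∀ x, a ≤ g x + t) : ∃ b L, IsC11Between a b L fun x => g x + t := by
  obtain ⟨b, hb⟩ := hsupp.exists_bound_of_continuous hg.continuous
  have hg' : ContDiff ℝ 1 (fderiv ℝ g) := hg.fderiv_right (by norm_num)
  obtain ⟨L, hL⟩ := hg.lipschitzWith_of_hasCompactSupport hsupp two_ne_zero
  obtain ⟨L', hL'⟩ := hg'.lipschitzWith_of_hasCompactSupport (hsupp.fderiv ℝ) one_ne_zero
  refine ⟨b + t, max L L', fun x => ⟨ha x, ?_⟩, (hg.differentiable two_ne_zero).add_const t, ?_, ?_⟩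
  · linarith [(le_abs_self (g x)).trans (hb x)]
  · exact LipschitzWith.of_dist_le_mul fun x y => by
      simpa only [dist_add_right] using (hL.weaken (le_max_left L L')).dist_le_mul x y
  · rw [show fderiv ℝ (fun x => g x + t) = fderiv ℝ g from funext fun _ => fderiv_add_const t]
    exact hL'.weaken (le_max_right L L')

lemma exists_isC11Between_tendsto [FiniteDimensional ℝ F] {f : F → ℝ} (hf : Continuous f)
    (hf₀ : ∀ x, 0 ≤ f x) :
    ∃ (b : ℕ → ℝ) (L : ℕ → ℝ≥0) (u : ℕ → F → ℝ),
      (∀ k : ℕ, IsC11Between (1 / (k + 1)) (b k) (L k) (u k)) ∧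
      (∀ (k : ℕ) (x : F), u k x ≤ f x + 3 * (1 / (k + 1))) ∧
      ∀ x, Tendsto (u · x) atTop (𝓝 (f x)) := by
  let χ (k : ℕ) : ContDiffBump (0 : F) := ⟨k + 1, k + 2, by positivity, by linarith⟩
  have hsupp (k : ℕ) : HasCompactSupport fun x => χ k x * f x := (χ k).hasCompactSupport.mul_right
  choose g hg hgf hgsupp using fun k : ℕ => ((χ k).continuous.mul hf).exists_contDiff_approx 2
    (ε := fun _ => 1 / ((k : ℝ) + 1)) continuous_const fun _ => Nat.one_div_pos_of_nat
  have hgf' (k : ℕ) (x : F) : -(1 / ((k : ℝ) + 1)) < g k x - χ k x * f x ∧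
      g k x - χ k x * f x < 1 / ((k : ℝ) + 1) := abs_lt.1 (hgf k x)
  have hnonneg (k : ℕ) (x : F) : 0 ≤ χ k x * f x := mul_nonneg (χ k).nonneg (hf₀ x)
  choose b L hu using fun k : ℕ => exists_isC11Between_add_const (hg k)
    ((hsupp k).mono (hgsupp k)) (a := 1 / ((k : ℝ) + 1)) (t := 2 * (1 / ((k : ℝ) + 1)))
    fun x => by linarith [(hgf' k x).1, hnonneg k x]
  refine ⟨b, L, _, hu, fun k x => ?_, fun x => ?_⟩
  · linarith [(hgf' k x).2, mul_le_of_le_one_left (hf₀ x) ((χ k).le_one (x := x))]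
  · rw [tendsto_iff_dist_tendsto_zero]
    have hlim : Tendsto (fun k : ℕ => 3 * (1 / ((k : ℝ) + 1))) atTop (𝓝 0) := by
      simpa only [mul_zero] using tendsto_one_div_add_atTop_nhds_zero_nat.const_mul (3 : ℝ)
    refine squeeze_zero' (.of_forall fun k => dist_nonneg) ?_ hlim
    obtain ⟨k₀, hk₀⟩ := exists_nat_ge ‖x‖
    filter_upwards [eventually_ge_atTop k₀] with k hk
    have hmem : x ∈ Metric.closedBall 0 ((k : ℝ) + 1) := by
      rw [mem_closedBall_zero_iff]
      linarith [(Nat.cast_le (α := ℝ)).2 hk]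
    have hclose := hgf' k x
    rw [(χ k).one_of_mem_closedBall hmem, one_mul] at hclose
    exact abs_le.2 ⟨by linarith, by linarith⟩

lemma lintegral_ofReal_le_of_tendsto {X : Type*} [MeasurableSpace X] {μ : Measure X}
    {φ : ℕ → X → ℝ} {ψ : X → ℝ} {r : ℕ → ℝ} {s : ℝ} (hφ : ∀ k, Measurable (φ k))
    (hlim : ∀ x, Tendsto (φ · x) atTop (𝓝 (ψ x))) (hr : Tendsto r atTop (𝓝 s))
    (hle : ∀ᶠ k in atTop, ∫⁻ x, ENNReal.ofReal (φ k x) ∂μ ≤ ENNReal.ofReal (r k)) :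
    ∫⁻ x, ENNReal.ofReal (ψ x) ∂μ ≤ ENNReal.ofReal s := by
  have hψ (x : X) : liminf (fun k => ENNReal.ofReal (φ k x)) atTop = ENNReal.ofReal (ψ x) :=
    (ENNReal.tendsto_ofReal (hlim x)).liminf_eq
  simp only [← hψ, ← (ENNReal.tendsto_ofReal hr).liminf_eq]
  exact (lintegral_liminf_le fun k => (hφ k).ennreal_ofReal).trans (liminf_le_liminf hle)

end Approximation

section ContinuousFunctions

variable {ι : Type*} [Fintype ι] {E : Type*} [NormedAddCommGroup E] [InnerProductSpace ℝ E]
  [FiniteDimensional ℝ E] [MeasurableSpace E] [BorelSpace E] {F : ι → Type*}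
  [∀ i, NormedAddCommGroup (F i)] [∀ i, InnerProductSpace ℝ (F i)]
  [∀ i, FiniteDimensional ℝ (F i)] [∀ i, MeasurableSpace (F i)] [∀ i, BorelSpace (F i)]
  {B : ∀ i, E →L[ℝ] F i} {c : ι → ℝ}

namespace IsSubgeometric

lemma lintegral_prod_rpow_le_of_isC11Between (h : IsSubgeometric B c) {a : ℝ} (ha : 0 < a)
    {b : ι → ℝ} {L : ι → ℝ≥0} {u : ∀ i, F i → ℝ} (hu : ∀ i, IsC11Between a (b i) (L i) (u i)) :
    ∫⁻ x, ENNReal.ofReal (∏ i, u i (B i x) ^ c i) ∂(γ E)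
      ≤ ENNReal.ofReal (∏ i, (∫ y, u i y ∂(γ (F i))) ^ c i) := by
  have hb (i : ι) : 0 ≤ b i := ((hu i).nonneg ha 0).trans ((hu i).mem_Icc 0).2
  have hu' (i : ι) : IsC11Between a (∑ i, b i) (∑ i, L i) (u i) :=
    (hu i).mono (Finset.single_le_sum (fun i _ => hb i) (Finset.mem_univ i))
      (Finset.single_le_sum (fun i _ => zero_le) (Finset.mem_univ i))
  have hcont := h.continuous_prod_rpow fun i => (hu i).lipschitzWith.continuous
  have hint : Integrable (fun x => ∏ i, u i (B i x) ^ c i) (γ E) :=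
    .of_bound hcont.aestronglyMeasurable _ (.of_forall (h.norm_prod_rpow_le ha hu'))
  rw [← ofReal_integral_eq_lintegral_ofReal hint (.of_forall fun x =>
    Finset.prod_nonneg fun i _ => Real.rpow_nonneg ((hu i).nonneg ha _) _)]
  exact ENNReal.ofReal_le_ofReal (h.integral_prod_rpow_le_of_isC11Between ha hu')

theorem lintegral_prod_rpow_le (h : IsSubgeometric B c) {f : ∀ i, F i → ℝ}
    (hf : ∀ i, Continuous (f i)) (hf₀ : ∀ i x, 0 ≤ f i x)
    (hfint : ∀ i, Integrable (f i) (γ (F i))) :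
    ∫⁻ x, ENNReal.ofReal (∏ i, f i (B i x) ^ c i) ∂(γ E)
      ≤ ENNReal.ofReal (∏ i, (∫ y, f i y ∂(γ (F i))) ^ c i) := by
  choose b L u hu hle hlim using fun i => exists_isC11Between_tendsto (hf i) (hf₀ i)
  have hu₀ (k : ℕ) (i : ι) (x : F i) : 0 ≤ u i k x := (hu i k).nonneg Nat.one_div_pos_of_nat x
  have hbound (k : ℕ) (i : ι) : ∫ y, u i k y ∂(γ (F i))
      ≤ ∫ y, f i y ∂(γ (F i)) + 3 * (1 / ((k : ℝ) + 1)) := by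
    refine (integral_mono_of_nonneg (.of_forall (hu₀ k i))
      ((hfint i).add (integrable_const (3 * (1 / ((k : ℝ) + 1)))))
        (.of_forall (hle i k))).trans_eq ?_
    rw [integral_add' (hfint i) (integrable_const _), integral_const, probReal_univ, one_smul]
  have hbound_lim (i : ι) : Tendsto
      (fun k : ℕ => ∫ y, f i y ∂(γ (F i)) + 3 * (1 / ((k : ℝ) + 1))) atTop
      (𝓝 (∫ y, f i y ∂(γ (F i)))) := by
    simpa only [mul_zero, add_zero] using
      (tendsto_one_div_add_atTop_nhds_zero_nat.const_mul 3).const_add (∫ y, f i y ∂(γ (F i)))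
  refine lintegral_ofReal_le_of_tendsto (φ := fun k x => ∏ i, u i k (B i x) ^ c i)
    (fun k => (h.continuous_prod_rpow fun i => (hu i k).lipschitzWith.continuous).measurable)
    (fun x => tendsto_finsetProd _ fun i _ => (hlim i _).rpow_const (Or.inr (h.nonneg i)))
    (tendsto_finsetProd _ fun i _ => (hbound_lim i).rpow_const (Or.inr (h.nonneg i)))
    (.of_forall fun k => ?_)
  exact (h.lintegral_prod_rpow_le_of_isC11Between Nat.one_div_pos_of_nat fun i => hu i k).trans
    (ENNReal.ofReal_le_ofReal (Finset.prod_le_prod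
      (fun i _ => Real.rpow_nonneg (integral_nonneg (hu₀ k i)) _)
      fun i _ => Real.rpow_le_rpow (integral_nonneg (hu₀ k i)) (hbound k i) (h.nonneg i)))

end IsSubgeometric

end ContinuousFunctions

section NoiseMaps

lemma norm_sum_sq_le_card_mul {κ V : Type*} [Fintype κ] [SeminormedAddCommGroup V] (w : κ → V) :
    ‖∑ k, w k‖ ^ 2 ≤ Fintype.card κ * ∑ k, ‖w k‖ ^ 2 :=
  (pow_le_pow_left₀ (norm_nonneg _) (norm_sum_le _ _) 2).trans sq_sum_le_card_mul_sum_sq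

lemma norm_sum_toLp_single_sq {X J : Type*} [SeminormedAddCommGroup X] [Fintype J] [DecidableEq J]
    {Z : J → Type*} [∀ j, SeminormedAddCommGroup (Z j)] (x : J → X) (z : ∀ j, Z j) :
    ‖∑ j, (WithLp.toLp 2 (x j, PiLp.single 2 j (z j)) : WithLp 2 (X × PiLp 2 Z))‖ ^ 2
      = ‖∑ j, x j‖ ^ 2 + ∑ j, ‖z j‖ ^ 2 := by
  have hsum : ∑ j, (WithLp.toLp 2 (x j, PiLp.single 2 j (z j)) : WithLp 2 (X × PiLp 2 Z))
      = WithLp.toLp 2 (∑ j, x j, WithLp.toLp 2 z) := by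
    refine WithLp.ofLp_injective 2 (Prod.ext ?_ ?_)
    · rw [WithLp.ofLp_sum, Prod.fst_sum]
    · rw [WithLp.ofLp_sum, Prod.snd_sum]
      exact WithLp.ofLp_injective 2 ((WithLp.ofLp_sum ..).trans (Finset.univ_sum_single z))
  rw [hsum, WithLp.prod_norm_sq_eq_of_L2]
  simp only [WithLp.toLp_fst, WithLp.toLp_snd, PiLp.norm_sq_eq_of_L2]

variable {X : Type*} [NormedAddCommGroup X] [InnerProductSpace ℝ X] {ι κ : Type*} {F G : ι → Type*}
  [∀ i, NormedAddCommGroup (F i)] [∀ i, InnerProductSpace ℝ (F i)]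
  [∀ i, NormedAddCommGroup (G i)] [∀ i, InnerProductSpace ℝ (G i)]

lemma norm_sum_prod_smul_sq_le [Fintype ι] [Fintype κ] {p : ι → ℝ} (hp : ∀ i, 0 ≤ p i)
    {T : ∀ i, F i →L[ℝ] X}
    (hT : ∀ w : ∀ i, F i, ‖∑ i, p i • T i (w i)‖ ^ 2 ≤ ∑ i, p i * ‖w i‖ ^ 2)
    (w : ∀ j : ι × κ, F j.1) :
    ‖∑ j, p j.1 • T j.1 (w j)‖ ^ 2 ≤ Fintype.card κ * ∑ j, p j.1 * ‖w j‖ ^ 2 := by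
  calc ‖∑ j, p j.1 • T j.1 (w j)‖ ^ 2 = ‖∑ i, p i • T i (∑ k, w (i, k))‖ ^ 2 := by
        simp only [Fintype.sum_prod_type, map_sum, Finset.smul_sum]
    _ ≤ ∑ i, p i * ‖∑ k, w (i, k)‖ ^ 2 := hT fun i => ∑ k, w (i, k)
    _ ≤ ∑ i, p i * (Fintype.card κ * ∑ k, ‖w (i, k)‖ ^ 2) :=
        Finset.sum_le_sum fun i _ =>
          mul_le_mul_of_nonneg_left (norm_sum_sq_le_card_mul (V := F i) fun k => w (i, k)) (hp i)
    _ = Fintype.card κ * ∑ j, p j.1 * ‖w j‖ ^ 2 := by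
        simp only [Fintype.sum_prod_type, Finset.mul_sum, mul_left_comm]

/-- The map `(x, z) ↦ C i x + A i (z (i, k))`, where the noise `z` consists of independent copies,
indexed by `k : κ`, of a vector of each `G i`. -/
def noiseMap (C : ∀ i, X →L[ℝ] F i) (A : ∀ i, G i →L[ℝ] F i) (j : ι × κ) :
    WithLp 2 (X × PiLp 2 fun j : ι × κ => G j.1) →L[ℝ] F j.1 :=
  (C j.1).comp (WithLp.fstL 2 ℝ _ _)
    + (A j.1).comp ((PiLp.proj 2 (fun j : ι × κ => G j.1) j).comp (WithLp.sndL 2 ℝ _ _))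

variable {C : ∀ i, X →L[ℝ] F i} {A : ∀ i, G i →L[ℝ] F i}

lemma noiseMap_apply (j : ι × κ) (g : WithLp 2 (X × PiLp 2 fun j : ι × κ => G j.1)) :
    noiseMap C A j g = C j.1 g.fst + A j.1 (g.snd j) := rfl

variable [Fintype ι] [Fintype κ] [FiniteDimensional ℝ X] [∀ i, FiniteDimensional ℝ (F i)]
  [∀ i, FiniteDimensional ℝ (G i)]

lemma adjoint_noiseMap_apply [DecidableEq ι] [DecidableEq κ] (j : ι × κ) (w : F j.1) :
    adjoint (noiseMap C A j) w
      = WithLp.toLp 2 (adjoint (C j.1) w, PiLp.single 2 j (adjoint (A j.1) w)) := by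
  refine ext_inner_left ℝ fun g => ?_
  rw [ContinuousLinearMap.adjoint_inner_right, noiseMap_apply, inner_add_left,
    WithLp.prod_inner_apply, WithLp.toLp_fst, WithLp.toLp_snd,
    ContinuousLinearMap.adjoint_inner_right, PiLp.inner_apply, Finset.sum_eq_single j]
  · simp [ContinuousLinearMap.adjoint_inner_right]
  · intro b _ hb
    simp [Pi.single_eq_of_ne hb]
  · simp

lemma norm_adjoint_noiseMap
    (hCA : ∀ i w, ‖adjoint (C i) w‖ ^ 2 + ‖adjoint (A i) w‖ ^ 2 = ‖w‖ ^ 2) (j : ι × κ) (w : F j.1) :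
    ‖adjoint (noiseMap C A j) w‖ = ‖w‖ := by
  classical
  rw [← sq_eq_sq₀ (norm_nonneg _) (norm_nonneg _), adjoint_noiseMap_apply,
    WithLp.prod_norm_sq_eq_of_L2, WithLp.toLp_fst, WithLp.toLp_snd, PiLp.norm_single, hCA]

lemma norm_sum_smul_adjoint_noiseMap_sq_le {p : ι → ℝ} (hp : ∀ i, 0 ≤ p i)
    (hCA : ∀ i w, ‖adjoint (C i) w‖ ^ 2 + ‖adjoint (A i) w‖ ^ 2 = ‖w‖ ^ 2)
    (hC : ∀ w : ∀ i, F i, ‖∑ i, p i • adjoint (C i) (w i)‖ ^ 2 ≤ ∑ i, p i * ‖w i‖ ^ 2)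
    (w : ∀ j : ι × κ, F j.1) :
    ‖∑ j, p j.1 • adjoint (noiseMap C A j) (w j)‖ ^ 2
      ≤ (Fintype.card κ + ∑ i, p i) * ∑ j, p j.1 * ‖w j‖ ^ 2 := by
  classical
  have hA (j : ι × κ) : ‖p j.1 • adjoint (A j.1) (w j)‖ ^ 2
      ≤ (∑ i, p i) * (p j.1 * ‖w j‖ ^ 2) := by
    have hpj : p j.1 ≤ ∑ i, p i := Finset.single_le_sum (fun i _ => hp i) (Finset.mem_univ j.1)
    have hAw : ‖adjoint (A j.1) (w j)‖ ^ 2 ≤ ‖w j‖ ^ 2 :=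
      (le_add_of_nonneg_left (sq_nonneg _)).trans_eq (hCA j.1 (w j))
    rw [norm_smul, Real.norm_of_nonneg (hp _), mul_pow, sq (p j.1), mul_assoc]
    exact mul_le_mul hpj (mul_le_mul_of_nonneg_left hAw (hp _))
      (mul_nonneg (hp _) (sq_nonneg _)) ((hp _).trans hpj)
  have hsmul (j : ι × κ) : p j.1 • adjoint (noiseMap C A j) (w j)
      = WithLp.toLp 2 (p j.1 • adjoint (C j.1) (w j),
          PiLp.single 2 j (p j.1 • adjoint (A j.1) (w j))) := by
    rw [← map_smul, adjoint_noiseMap_apply, map_smul, map_smul]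
  simp only [hsmul]
  rw [norm_sum_toLp_single_sq, add_mul, Finset.mul_sum (a := ∑ i, p i)]
  exact add_le_add (norm_sum_prod_smul_sq_le hp hC w) (Finset.sum_le_sum fun j _ => hA j)

lemma isSubgeometric_noiseMap {p : ι → ℝ} (hp : ∀ i, 0 ≤ p i)
    (hCA : ∀ i w, ‖adjoint (C i) w‖ ^ 2 + ‖adjoint (A i) w‖ ^ 2 = ‖w‖ ^ 2)
    (hC : ∀ w : ∀ i, F i, ‖∑ i, p i • adjoint (C i) (w i)‖ ^ 2 ≤ ∑ i, p i * ‖w i‖ ^ 2) :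
    IsSubgeometric (noiseMap C A) fun j : ι × κ => p j.1 / (Fintype.card κ + ∑ i, p i) where
  nonneg j := div_nonneg (hp _) (add_nonneg (Nat.cast_nonneg _) (Finset.sum_nonneg fun i _ => hp i))
  norm_adjoint := norm_adjoint_noiseMap hCA
  norm_sq_sum_le w := by
    set N : ℝ := Fintype.card κ + ∑ i, p i
    calc ‖∑ j, (p j.1 / N) • adjoint (noiseMap C A j) (w j)‖ ^ 2
        = N⁻¹ ^ 2 * ‖∑ j, p j.1 • adjoint (noiseMap C A j) (w j)‖ ^ 2 := by
          simp only [div_eq_inv_mul, mul_smul]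
          rw [← Finset.smul_sum, norm_smul, mul_pow, Real.norm_eq_abs, sq_abs]
      _ ≤ N⁻¹ ^ 2 * (N * ∑ j, p j.1 * ‖w j‖ ^ 2) := mul_le_mul_of_nonneg_left
          (norm_sum_smul_adjoint_noiseMap_sq_le hp hCA hC w) (sq_nonneg _)
      _ = ∑ j, p j.1 / N * ‖w j‖ ^ 2 := by
          have hN : N⁻¹ * N⁻¹ * N = N⁻¹ := by simpa only [inv_inv] using mul_self_mul_inv N⁻¹
          rw [← mul_assoc, sq, hN]
          simp only [Finset.mul_sum, div_eq_inv_mul, mul_assoc]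

end NoiseMaps

section NoiseExtension

/-- The reflection `(x, z) ↦ (x, -z)`. -/
def reflectSnd (X Z : Type*) [NormedAddCommGroup X] [InnerProductSpace ℝ X]
    [NormedAddCommGroup Z] [InnerProductSpace ℝ Z] : WithLp 2 (X × Z) ≃ₗᵢ[ℝ] WithLp 2 (X × Z) :=
  (LinearIsometryEquiv.refl ℝ X).withLpProdCongr 2 (LinearIsometryEquiv.neg ℝ)

lemma reflectSnd_apply {X Z : Type*} [NormedAddCommGroup X] [InnerProductSpace ℝ X]
    [NormedAddCommGroup Z] [InnerProductSpace ℝ Z] (g : WithLp 2 (X × Z)) :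
    reflectSnd X Z g = WithLp.toLp 2 (g.fst, -g.snd) := rfl

variable {X Z : Type*} [NormedAddCommGroup X] [InnerProductSpace ℝ X] [FiniteDimensional ℝ X]
  [MeasurableSpace X] [BorelSpace X] [NormedAddCommGroup Z] [InnerProductSpace ℝ Z]
  [FiniteDimensional ℝ Z] [MeasurableSpace Z] [BorelSpace Z]

lemma map_fst_stdGaussian :
    (γ (WithLp 2 (X × Z))).map (WithLp.fstL 2 ℝ X Z) = γ X := by
  refine map_stdGaussian_of_norm_adjoint fun x => ?_
  have hadj : adjoint (WithLp.fstL 2 ℝ X Z) x = WithLp.toLp 2 (x, 0) :=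
    ext_inner_left ℝ fun g => by
      simp [ContinuousLinearMap.adjoint_inner_right, WithLp.prod_inner_apply]
  rw [hadj, WithLp.norm_toLp_fst]

lemma lintegral_comp_reflectSnd (φ : WithLp 2 (X × Z) → ℝ≥0∞) :
    ∫⁻ g, φ (reflectSnd X Z g) ∂(γ (WithLp 2 (X × Z))) = ∫⁻ g, φ g ∂(γ (WithLp 2 (X × Z))) := by
  conv_rhs => rw [← ProbabilityTheory.stdGaussian_map (reflectSnd X Z)]
  exact ((reflectSnd X Z).toHomeomorph.measurableEmbedding.lintegral_map φ).symm

lemma lintegral_le_of_sq_le_mul_reflectSnd {φ : WithLp 2 (X × Z) → ℝ} {ψ : X → ℝ}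
    (hφ : Measurable φ) (hψ : Measurable ψ) (hφ₀ : ∀ g, 0 ≤ φ g)
    (h : ∀ g, ψ g.fst ^ 2 ≤ φ g * φ (reflectSnd X Z g)) :
    ∫⁻ x, ENNReal.ofReal (ψ x) ∂(γ X) ≤ ∫⁻ g, ENNReal.ofReal (φ g) ∂(γ (WithLp 2 (X × Z))) := by
  have hmean (g : WithLp 2 (X × Z)) : 2 * ψ g.fst ≤ φ g + φ (reflectSnd X Z g) :=
    (abs_le_of_sq_le_sq' (by nlinarith [h g, sq_nonneg (φ g - φ (reflectSnd X Z g))])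
      (add_nonneg (hφ₀ _) (hφ₀ _))).2
  refine (ENNReal.mul_le_mul_iff_right two_ne_zero ENNReal.ofNat_ne_top).1 ?_
  calc 2 * ∫⁻ x, ENNReal.ofReal (ψ x) ∂(γ X)
      = ∫⁻ g : WithLp 2 (X × Z), ENNReal.ofReal (2 * ψ g.fst) ∂(γ (WithLp 2 (X × Z))) := by
        rw [← map_fst_stdGaussian (X := X) (Z := Z), lintegral_map hψ.ennreal_ofReal
          (WithLp.fstL 2 ℝ X Z).continuous.measurable,
          ← lintegral_const_mul' _ _ ENNReal.ofNat_ne_top]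
        simp only [ENNReal.ofReal_mul zero_le_two, ENNReal.ofReal_ofNat, WithLp.fstL_apply]
    _ ≤ ∫⁻ g, ENNReal.ofReal (φ g) + ENNReal.ofReal (φ (reflectSnd X Z g))
          ∂(γ (WithLp 2 (X × Z))) := lintegral_mono fun g =>
        (ENNReal.ofReal_le_ofReal (hmean g)).trans ENNReal.ofReal_add_le
    _ = 2 * ∫⁻ g, ENNReal.ofReal (φ g) ∂(γ (WithLp 2 (X × Z))) := by
        rw [lintegral_add_left hφ.ennreal_ofReal,
          lintegral_comp_reflectSnd fun g => ENNReal.ofReal (φ g), two_mul]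

variable {ι : Type*} [Fintype ι] {F G : ι → Type*}
  [∀ i, NormedAddCommGroup (F i)] [∀ i, InnerProductSpace ℝ (F i)]
  [∀ i, FiniteDimensional ℝ (F i)] [∀ i, MeasurableSpace (F i)] [∀ i, BorelSpace (F i)]
  [∀ i, NormedAddCommGroup (G i)] [∀ i, InnerProductSpace ℝ (G i)]
  [∀ i, FiniteDimensional ℝ (G i)] [∀ i, MeasurableSpace (G i)] [∀ i, BorelSpace (G i)]
  {C : ∀ i, X →L[ℝ] F i} {A : ∀ i, G i →L[ℝ] F i} {p : ι → ℝ} {f : ∀ i, F i → ℝ}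

lemma prod_prod_rpow_div {κ : Type*} [Fintype κ] {t : ι → ℝ} (ht : ∀ i, 0 ≤ t i) (N : ℝ) :
    ∏ j : ι × κ, t j.1 ^ (p j.1 / N) = (∏ i, t i ^ p i) ^ (Fintype.card κ / N) := by
  rw [Fintype.prod_prod_type, ← Real.finsetProd_rpow _ _ fun i _ => Real.rpow_nonneg (ht i) _]
  refine Finset.prod_congr rfl fun i _ => ?_
  simp only [Finset.prod_const, Finset.card_univ]
  rw [← Real.rpow_natCast, ← Real.rpow_mul (ht i), ← Real.rpow_mul (ht i), div_mul_eq_mul_div,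
    mul_div_assoc]

lemma lintegral_prod_rpow_rpow_le (κ : Type*) [Fintype κ] (hp : ∀ i, 0 ≤ p i)
    (hCA : ∀ i w, ‖adjoint (C i) w‖ ^ 2 + ‖adjoint (A i) w‖ ^ 2 = ‖w‖ ^ 2)
    (hC : ∀ w : ∀ i, F i, ‖∑ i, p i • adjoint (C i) (w i)‖ ^ 2 ≤ ∑ i, p i * ‖w i‖ ^ 2)
    (hf : ∀ i, Continuous (f i)) (hf₀ : ∀ i x, 0 ≤ f i x)
    (hfint : ∀ i, Integrable (f i) (γ (F i)))
    (hfA : ∀ i y z, f i y ^ 2 ≤ f i (y + A i z) * f i (y - A i z)) :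
    ∫⁻ x, ENNReal.ofReal ((∏ i, f i (C i x) ^ p i) ^
        (Fintype.card κ / (Fintype.card κ + ∑ i, p i))) ∂(γ X)
      ≤ ENNReal.ofReal ((∏ i, (∫ y, f i y ∂(γ (F i))) ^ p i) ^
        (Fintype.card κ / (Fintype.card κ + ∑ i, p i))) := by
  have hB : IsSubgeometric (noiseMap C A) fun j : ι × κ => p j.1 / (Fintype.card κ + ∑ i, p i) :=
    isSubgeometric_noiseMap hp hCA hC
  have hfB (g : WithLp 2 (X × PiLp 2 fun j : ι × κ => G j.1)) (j : ι × κ) :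
      f j.1 (C j.1 g.fst) ^ 2
        ≤ f j.1 (noiseMap C A j g) * f j.1 (noiseMap C A j (reflectSnd X _ g)) := by
    simpa only [noiseMap_apply, reflectSnd_apply, WithLp.toLp_fst, WithLp.toLp_snd, PiLp.neg_apply,
      map_neg, ← sub_eq_add_neg] using hfA j.1 (C j.1 g.fst) (g.snd j)
  simp only [← prod_prod_rpow_div (κ := κ) fun i => integral_nonneg (hf₀ i),
    ← prod_prod_rpow_div (κ := κ) fun i => hf₀ i _]
  refine le_trans (lintegral_le_of_sq_le_mul_reflectSnd
    (hB.continuous_prod_rpow fun j => hf j.1).measurable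
    (continuous_finsetProd _ fun j _ => ((hf _).comp (C j.1).continuous).rpow_const
      fun x => Or.inr (hB.nonneg j)).measurable
    (fun g => Finset.prod_nonneg fun j _ => Real.rpow_nonneg (hf₀ _ _) _) fun g => ?_)
    (hB.lintegral_prod_rpow_le (fun j => hf j.1) (fun j => hf₀ j.1) fun j => hfint j.1)
  rw [← Finset.prod_pow, ← Finset.prod_mul_distrib]
  refine Finset.prod_le_prod (fun j _ => sq_nonneg _) fun j _ => ?_
  rw [← Real.mul_rpow (hf₀ _ _) (hf₀ _ _), Real.rpow_pow_comm (hf₀ _ _)]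
  exact Real.rpow_le_rpow (sq_nonneg _) (hfB g j) (hB.nonneg j)

theorem lintegral_prod_rpow_le_of_noise (hp : ∀ i, 0 ≤ p i)
    (hCA : ∀ i w, ‖adjoint (C i) w‖ ^ 2 + ‖adjoint (A i) w‖ ^ 2 = ‖w‖ ^ 2)
    (hC : ∀ w : ∀ i, F i, ‖∑ i, p i • adjoint (C i) (w i)‖ ^ 2 ≤ ∑ i, p i * ‖w i‖ ^ 2)
    (hf : ∀ i, Continuous (f i)) (hf₀ : ∀ i x, 0 ≤ f i x)
    (hfint : ∀ i, Integrable (f i) (γ (F i)))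
    (hfA : ∀ i y z, f i y ^ 2 ≤ f i (y + A i z) * f i (y - A i z)) :
    ∫⁻ x, ENNReal.ofReal (∏ i, f i (C i x) ^ p i) ∂(γ X)
      ≤ ENNReal.ofReal (∏ i, (∫ y, f i y ∂(γ (F i))) ^ p i) := by
  have hcont : Continuous fun x => ∏ i, f i (C i x) ^ p i := continuous_finsetProd _ fun i _ =>
    ((hf i).comp (C i).continuous).rpow_const fun _ => Or.inr (hp i)
  have hS : 0 ≤ ∑ i, p i := Finset.sum_nonneg fun i _ => hp i
  have hlim (t : ℝ) : Tendsto (fun K : ℕ => t ^ ((K : ℝ) / (K + ∑ i, p i))) atTop (𝓝 t) := by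
    simpa only [Real.rpow_one] using
      tendsto_const_nhds.rpow (tendsto_natCast_div_add_atTop (∑ i, p i)) (Or.inr zero_lt_one)
  refine lintegral_ofReal_le_of_tendsto
    (fun K => (hcont.rpow_const fun _ => Or.inr (by positivity)).measurable)
    (fun x => hlim _) (hlim _) (.of_forall fun K => ?_)
  simpa only [Fintype.card_fin] using
    lintegral_prod_rpow_rpow_le (Fin K) hp hCA hC hf hf₀ hfint hfA

end NoiseExtension

section StandardGaussian

lemma gaussianDensity_eq_prod {k : ℕ} (x : Fin k → ℝ) :
    (2 * Real.pi) ^ (-(k : ℝ) / 2) * Real.exp (-(∑ i, x i ^ 2) / 2)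
      = ∏ i, ProbabilityTheory.gaussianPDFReal 0 1 (x i) := by
  have hpi : 0 ≤ 2 * Real.pi := by positivity
  simp only [ProbabilityTheory.gaussianPDFReal, NNReal.coe_one, mul_one, sub_zero]
  rw [Finset.prod_mul_distrib, ← Real.exp_sum, Finset.prod_const, Finset.card_univ,
    Fintype.card_fin, Real.sqrt_eq_rpow, ← Real.rpow_neg hpi, ← Real.rpow_natCast,
    ← Real.rpow_mul hpi, ← Finset.sum_div, Finset.sum_neg_distrib]
  congr 2
  ring

lemma stdGaussian_eq_pi (k : ℕ) :
    stdGaussian k = Measure.pi fun _ => ProbabilityTheory.gaussianReal 0 1 := by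
  refine (Measure.pi_eq fun s hs => ?_).symm
  have hint (i : Fin k) :
      Integrable (ProbabilityTheory.gaussianPDFReal 0 1) (volume.restrict (s i)) :=
    (ProbabilityTheory.integrable_gaussianPDFReal 0 1).restrict
  have hnonneg : ∀ x, 0 ≤ ProbabilityTheory.gaussianPDFReal 0 1 x :=
    ProbabilityTheory.gaussianPDFReal_nonneg 0 1
  simp only [stdGaussian, gaussianDensity_eq_prod]
  rw [withDensity_apply _ (MeasurableSet.univ_pi hs), volume_pi, Measure.restrict_pi_pi,
    ← ofReal_integral_eq_lintegral_ofReal (Integrable.fintype_prod hint)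
      (.of_forall fun x => Finset.prod_nonneg fun i _ => hnonneg _),
    integral_fintype_prod_eq_prod (fun _ => ProbabilityTheory.gaussianPDFReal 0 1),
    ENNReal.ofReal_prod_of_nonneg fun i _ => integral_nonneg hnonneg]
  exact Finset.prod_congr rfl fun i _ =>
    (ProbabilityTheory.gaussianReal_apply_eq_integral 0 one_ne_zero (s i)).symm

lemma stdGaussian_eq_map (k : ℕ) :
    stdGaussian k = (γ (EuclideanSpace ℝ (Fin k))).map
      (MeasurableEquiv.toLp 2 (Fin k → ℝ)).symm := by
  rw [stdGaussian_eq_pi, ← ProbabilityTheory.map_pi_eq_stdGaussian]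
  exact ((MeasurableEquiv.toLp 2 (Fin k → ℝ)).map_symm_map).symm

end StandardGaussian

section LogConvexity

variable {k : ℕ} {f h : (Fin k → ℝ) → ℝ} {Q : Matrix (Fin k) (Fin k) ℝ}

lemma LogConvexFun.sq_le_mul (hh : LogConvexFun h) (y v : Fin k → ℝ) :
    h y ^ 2 ≤ h (y + v) * h (y - v) := by
  have hmid := hh.2 (y + v) (y - v) (1 / 2) (1 / 2) (by norm_num) (by norm_num) (by norm_num)
  have hy : (1 / 2 : ℝ) • (y + v) + (1 / 2 : ℝ) • (y - v) = y := by module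
  rwa [hy, ← Real.mul_rpow (hh.1 _) (hh.1 _), ← Real.sqrt_eq_rpow,
    Real.le_sqrt (hh.1 _) (mul_nonneg (hh.1 _) (hh.1 _))] at hmid

lemma LogConvexFun.eq_zero_of_apply_eq_zero (hh : LogConvexFun h) {x : Fin k → ℝ} (hx : h x = 0) :
    h = 0 := by
  funext y
  have hsq := hh.sq_le_mul y (x - y)
  rw [add_sub_cancel, hx, zero_mul] at hsq
  exact pow_eq_zero_iff two_ne_zero |>.1 (le_antisymm hsq (sq_nonneg _))

lemma LogConvexFun.convexOn_log (hh : LogConvexFun h) (hpos : ∀ x, 0 < h x) :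
    ConvexOn ℝ Set.univ fun x => Real.log (h x) := by
  refine ⟨convex_univ, fun x _ y _ a b ha hb hab => ?_⟩
  have hlog := Real.log_le_log (hpos _) (hh.2 x y a b ha hb hab)
  rwa [Real.log_mul (Real.rpow_pos_of_pos (hpos _) _).ne' (Real.rpow_pos_of_pos (hpos _) _).ne',
    Real.log_rpow (hpos _), Real.log_rpow (hpos _)] at hlog

lemma LogConvexFun.continuous (hh : LogConvexFun h) : Continuous h := by
  by_cases hzero : ∃ x, h x = 0
  · obtain ⟨x, hx⟩ := hzero
    rw [hh.eq_zero_of_apply_eq_zero hx]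
    exact continuous_zero
  · have hpos (x : Fin k → ℝ) : 0 < h x := (hh.1 x).lt_of_ne' (not_exists.1 hzero x)
    have hlog : Continuous fun x => Real.log (h x) :=
      continuousOn_univ.1 ((hh.convexOn_log hpos).continuousOn isOpen_univ)
    exact (Real.continuous_exp.comp hlog).congr fun x => Real.exp_log (hpos x)

lemma gaussFn_sq_le_mul {v : Fin k → ℝ} (hv : Q *ᵥ v ⬝ᵥ v ≤ 0) (y : Fin k → ℝ) :
    gaussFn Q y ^ 2 ≤ gaussFn Q (y + v) * gaussFn Q (y - v) := by
  simp only [gaussFn, sq, ← Real.exp_add, mulVec_add, mulVec_sub, add_dotProduct, sub_dotProduct,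
    dotProduct_add, dotProduct_sub]
  exact Real.exp_le_exp.2 (by nlinarith [Real.pi_pos])

lemma MoreLogConvex.nonneg (hf : MoreLogConvex f Q) (x : Fin k → ℝ) : 0 ≤ f x := by
  obtain ⟨h, hh, rfl⟩ := hf
  exact mul_nonneg (Real.exp_nonneg _) (hh.1 x)

lemma MoreLogConvex.continuous (hf : MoreLogConvex f Q) : Continuous f := by
  obtain ⟨h, hh, rfl⟩ := hf
  have := hh.continuous
  unfold gaussFn
  fun_prop

lemma MoreLogConvex.sq_le_mul (hf : MoreLogConvex f Q) {v : Fin k → ℝ} (hv : Q *ᵥ v ⬝ᵥ v ≤ 0)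
    (y : Fin k → ℝ) : f y ^ 2 ≤ f (y + v) * f (y - v) := by
  obtain ⟨h, hh, rfl⟩ := hf
  rw [mul_pow, mul_mul_mul_comm]
  exact mul_le_mul (gaussFn_sq_le_mul hv y) (hh.sq_le_mul y v) (sq_nonneg _)
    (mul_nonneg (Real.exp_nonneg _) (Real.exp_nonneg _))

end LogConvexity

section MatrixForm

open scoped MatrixOrder ComplexOrder in
lemma exists_eq_transpose_mul_self {κ : Type*} [Fintype κ] {S : Matrix κ κ ℝ}
    (hS : S.PosSemidef) : ∃ B : Matrix κ κ ℝ, S = Bᵀ * B := by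
  classical
  obtain ⟨B, hB⟩ := CStarAlgebra.nonneg_iff_eq_star_mul_self.1 hS.nonneg
  exact ⟨B, by rw [hB, star_eq_conjTranspose, conjTranspose_eq_transpose_of_trivial]⟩

lemma dotProduct_transpose_mul_mulVec {κ κ' : Type*} [Fintype κ] [Fintype κ'] (M : Matrix κ κ' ℝ)
    (w : κ' → ℝ) : w ⬝ᵥ (Mᵀ * M) *ᵥ w = M *ᵥ w ⬝ᵥ M *ᵥ w := by
  rw [← mulVec_mulVec, dotProduct_mulVec, vecMul_transpose]

lemma mulVec_dotProduct_eq_zero_of_mul_eq_zero {κ κ' : Type*} [Fintype κ] [Fintype κ']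
    {S : Matrix κ κ ℝ} {B : Matrix κ' κ ℝ} (hBS : Bᵀ * B * S = 0) (z : κ' → ℝ) :
    S *ᵥ Bᵀ *ᵥ z ⬝ᵥ Bᵀ *ᵥ z = 0 := by
  rw [← conjTranspose_eq_transpose_of_trivial, conjTranspose_mul_self_mul_eq_zero] at hBS
  rw [dotProduct_mulVec, vecMul_transpose, mulVec_mulVec, hBS, zero_mulVec, zero_dotProduct]

lemma norm_sq_eq_ofLp_dotProduct {κ : Type*} [Fintype κ] (x : EuclideanSpace ℝ κ) :
    ‖x‖ ^ 2 = x.ofLp ⬝ᵥ x.ofLp := by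
  rw [EuclideanSpace.real_norm_sq_eq]
  simp only [dotProduct, sq]

section Euclidean

variable {κ κ' : Type*} [Fintype κ] [Fintype κ'] [DecidableEq κ] [DecidableEq κ']

lemma adjoint_toEuclideanLin (M : Matrix κ κ' ℝ) (w : EuclideanSpace ℝ κ) :
    adjoint (toEuclideanLin M).toContinuousLinearMap w = toEuclideanLin Mᵀ w := by
  rw [← conjTranspose_eq_transpose_of_trivial, toEuclideanLin_conjTranspose_eq_adjoint]
  rfl

lemma norm_adjoint_toEuclideanLin_sq_add {C : Matrix κ κ' ℝ} {B : Matrix κ κ ℝ}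
    (hCB : 1 - C * Cᵀ = Bᵀ * B) (w : EuclideanSpace ℝ κ) :
    ‖adjoint (toEuclideanLin C).toContinuousLinearMap w‖ ^ 2
      + ‖adjoint (toEuclideanLin Bᵀ).toContinuousLinearMap w‖ ^ 2 = ‖w‖ ^ 2 := by
  simp only [adjoint_toEuclideanLin, norm_sq_eq_ofLp_dotProduct, ofLp_toLpLin, toLin'_apply,
    ← dotProduct_transpose_mul_mulVec, transpose_transpose]
  rw [← hCB, ← dotProduct_add, ← add_mulVec, add_sub_cancel, one_mulVec]

end Euclidean

variable {ι : Type*} [Fintype ι] [DecidableEq ι] {n : ℕ} {d : ι → ℕ}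
  {C : ∀ i, Matrix (Fin (d i)) (Fin n) ℝ} {p : ι → ℝ}

/-- The matrix whose block rows are the `C i`. -/
def blockRows (C : ∀ i, Matrix (Fin (d i)) (Fin n) ℝ) : Matrix (Σ i, Fin (d i)) (Fin n) ℝ :=
  Matrix.of fun q a => C q.1 q.2 a

lemma inv_diagonal_of_pos {κ : Type*} [Fintype κ] [DecidableEq κ] {q : κ → ℝ} (hq : ∀ k, 0 < q k) :
    (Matrix.diagonal q)⁻¹ = Matrix.diagonal fun k => (q k)⁻¹ := by
  refine Matrix.inv_eq_left_inv ?_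
  rw [diagonal_mul_diagonal, ← diagonal_one]
  congr 1
  exact funext fun k => inv_mul_cancel₀ (hq k).ne'

lemma norm_sum_smul_adjoint_toEuclideanLin_sq_le (hp : ∀ i, 0 < p i)
    (hCCP : ((Matrix.diagonal fun q : Σ i, Fin (d i) => p q.1)⁻¹
      - blockRows C * (blockRows C)ᵀ).PosSemidef)
    (w : ∀ i, EuclideanSpace ℝ (Fin (d i))) :
    ‖∑ i, p i • adjoint (toEuclideanLin (C i)).toContinuousLinearMap (w i)‖ ^ 2
      ≤ ∑ i, p i * ‖w i‖ ^ 2 := by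
  -- The condition `C Cᵀ ≤ P⁻¹` is tested on the vector `P w`.
  set v : (Σ i, Fin (d i)) → ℝ := fun q => p q.1 * w q.1 q.2 with hv
  have hMv : (∑ i, p i • toEuclideanLin (C i)ᵀ (w i)).ofLp = (blockRows C)ᵀ *ᵥ v := by
    funext a
    simp only [mulVec, dotProduct, WithLp.ofLp_sum, Finset.sum_apply, PiLp.smul_apply,
      ofLp_toLpLin, toLin'_apply, Fintype.sum_sigma, smul_eq_mul, Finset.mul_sum, hv]
    exact Finset.sum_congr rfl fun i _ => Finset.sum_congr rfl fun b _ => mul_left_comm _ _ _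
  have hPv : v ⬝ᵥ (Matrix.diagonal fun q : Σ i, Fin (d i) => (p q.1)⁻¹) *ᵥ v
      = ∑ i, p i * ‖w i‖ ^ 2 := by
    simp only [dotProduct, mulVec_diagonal, Fintype.sum_sigma, EuclideanSpace.real_norm_sq_eq,
      Finset.mul_sum, hv]
    refine Finset.sum_congr rfl fun i _ => Finset.sum_congr rfl fun b _ => ?_
    rw [inv_mul_cancel_left₀ (hp i).ne', mul_assoc, sq]
  have hv₀ := hCCP.dotProduct_mulVec_nonneg v
  rw [inv_diagonal_of_pos fun q : Σ i, Fin (d i) => hp q.1, star_trivial, sub_mulVec,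
    dotProduct_sub, sub_nonneg, hPv] at hv₀
  simp only [adjoint_toEuclideanLin]
  rw [norm_sq_eq_ofLp_dotProduct, hMv, ← dotProduct_transpose_mul_mulVec, transpose_transpose]
  exact hv₀

variable {f : ∀ i, (Fin (d i) → ℝ) → ℝ}

lemma lintegral_prod_rpow_mulVec_le {B : ∀ i, Matrix (Fin (d i)) (Fin (d i)) ℝ}
    (hCB : ∀ i, 1 - C i * (C i)ᵀ = (B i)ᵀ * B i) (hp : ∀ i, 0 < p i)
    (hCCP : ((Matrix.diagonal fun q : Σ i, Fin (d i) => p q.1)⁻¹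
      - blockRows C * (blockRows C)ᵀ).PosSemidef)
    (hf : ∀ i, Continuous (f i)) (hf₀ : ∀ i x, 0 ≤ f i x)
    (hfint : ∀ i, Integrable (f i) (stdGaussian (d i)))
    (hfB : ∀ i y z, f i y ^ 2 ≤ f i (y + (B i)ᵀ *ᵥ z) * f i (y - (B i)ᵀ *ᵥ z)) :
    ∫⁻ x, ENNReal.ofReal (∏ i, f i (C i *ᵥ x) ^ p i) ∂stdGaussian n
      ≤ ∏ i, ENNReal.ofReal (∫ y, f i y ∂stdGaussian (d i)) ^ p i := by
  have hint₀ (i : ι) : 0 ≤ ∫ y, f i y ∂stdGaussian (d i) := integral_nonneg (hf₀ i)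
  simp only [ENNReal.ofReal_rpow_of_nonneg (hint₀ _) (hp _).le]
  rw [← ENNReal.ofReal_prod_of_nonneg fun i _ => Real.rpow_nonneg (hint₀ i) _]
  simp only [stdGaussian_eq_map, lintegral_map_equiv, integral_map_equiv, integrable_map_equiv]
    at hfint ⊢
  exact lintegral_prod_rpow_le_of_noise (X := EuclideanSpace ℝ (Fin n))
    (C := fun i => (toEuclideanLin (C i)).toContinuousLinearMap)
    (A := fun i => (toEuclideanLin (B i)ᵀ).toContinuousLinearMap)
    (f := fun i y => f i y.ofLp) (fun i => (hp i).le)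
    (fun i => norm_adjoint_toEuclideanLin_sq_add (hCB i))
    (norm_sum_smul_adjoint_toEuclideanLin_sq_le hp hCCP)
    (fun i => (hf i).comp (PiLp.continuous_ofLp 2 _)) (fun i y => hf₀ i _) hfint
    fun i y z => hfB i y.ofLp z.ofLp

theorem gaussian_brascamp_lieb_of_block_condition_general
    {Q : ∀ i, Matrix (Fin (d i)) (Fin (d i)) ℝ}
    (hCC : ∀ i, (1 - C i * (C i)ᵀ).PosSemidef) (hcomp : ∀ i, (1 - C i * (C i)ᵀ) * (Q i - 1) = 0)
    (hp : ∀ i, 0 < p i)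
    (hCCP : ((Matrix.diagonal fun q : Σ i, Fin (d i) => p q.1)⁻¹
      - blockRows C * (blockRows C)ᵀ).PosSemidef)
    (hfint : ∀ i, Integrable (f i) (stdGaussian (d i)))
    (hflc : ∀ i, MoreLogConvex (f i) ((2 * Real.pi)⁻¹ • (Q i - 1))) :
    ∫⁻ x, ENNReal.ofReal (∏ i, f i (C i *ᵥ x) ^ p i) ∂stdGaussian n
      ≤ ∏ i, ENNReal.ofReal (∫ y, f i y ∂stdGaussian (d i)) ^ p i := by
  choose B hB using fun i => exists_eq_transpose_mul_self (hCC i)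
  have hBQ (i : ι) : (B i)ᵀ * B i * ((2 * Real.pi)⁻¹ • (Q i - 1)) = 0 := by
    rw [← hB, Matrix.mul_smul, hcomp, smul_zero]
  exact lintegral_prod_rpow_mulVec_le hB hp hCCP (fun i => (hflc i).continuous)
    (fun i => (hflc i).nonneg) hfint fun i y z =>
      (hflc i).sq_le_mul (mulVec_dotProduct_eq_zero_of_mul_eq_zero (hBQ i) z).le y

end MatrixForm

/-- Gaussian Brascamp–Lieb inequality under the block condition `C Cᵀ ≤ P⁻¹`. -/
theorem gaussian_brascamp_lieb_of_block_condition
    {n m : ℕ} (hnm : n ≤ m) {ni : Fin m → ℕ}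
    (hni_pos : ∀ i, 0 < ni i) (hni_le : ∀ i, ni i ≤ n)
    (C : ∀ i, Matrix (Fin (ni i)) (Fin n) ℝ)
    (Q : ∀ i, Matrix (Fin (ni i)) (Fin (ni i)) ℝ)
    (hCC : ∀ i, ((1 : Matrix (Fin (ni i)) (Fin (ni i)) ℝ) - C i * (C i)ᵀ).PosSemidef)
    (hQ1 : ∀ i, (Q i - 1).PosSemidef)
    (hcomp : ∀ i, ((1 : Matrix (Fin (ni i)) (Fin (ni i)) ℝ) - C i * (C i)ᵀ) * (Q i - 1) = 0)
    (p : Fin m → ℝ) (hp : ∀ i, 0 < p i)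
    (hCCP : (((Matrix.diagonal fun q : Σ i : Fin m, Fin (ni i) => p q.1)⁻¹ :
          Matrix (Σ i : Fin m, Fin (ni i)) (Σ i : Fin m, Fin (ni i)) ℝ) -
        (Matrix.of fun (q : Σ i : Fin m, Fin (ni i)) (a : Fin n) => C q.1 q.2 a) *
          (Matrix.of fun (q : Σ i : Fin m, Fin (ni i)) (a : Fin n) => C q.1 q.2 a)ᵀ).PosSemidef)
    (f : ∀ i, (Fin (ni i) → ℝ) → ℝ)
    (hf0 : ∀ i x, 0 ≤ f i x)
    (hfint : ∀ i, Integrable (f i) (stdGaussian (ni i)))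
    (hflc : ∀ i, MoreLogConvex (f i) ((2 * Real.pi)⁻¹ • (Q i - 1))) :
    (∫⁻ x, ENNReal.ofReal (∏ i, f i ((C i).mulVec x) ^ p i) ∂ stdGaussian n) ≤
      ∏ i, ENNReal.ofReal (∫ y, f i y ∂ stdGaussian (ni i)) ^ p i :=
  gaussian_brascamp_lieb_of_block_condition_general hCC hcomp hp hCCP hfint hflc
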